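/- arXiv:2012.15789 — 4 statements merged into one kernel-verified Lean document; each statement's English description precedes it below -/
import Mathlib

section
/- If φ: ℝ² → ℝ is a mixed homogeneous polynomial with ∇φ(0) = 0 and det D²φ ≡ 0, then φ is a constant multiple of z₁^J, of z₂^J, or of (z₁ + λz₂)^J for some λ ∈ ℝ and J ∈ ℕ. -/
open MvPolynomial

/-- The Hessian determinant ω = ∂₁²φ·∂₂²φ − (∂₁∂₂φ)² of a two-variable polynomial. -/
noncomputable def hessDet (φ : MvPolynomial (Fin 2) ℝ) : MvPolynomial (Fin 2) ℝ :=
  pderiv 0 (pderiv 0 φ) * pderiv 1 (pderiv 1 φ) - (pderiv 0 (pderiv 1 φ)) ^ 2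

theorem X_pow_dvd_of_forall_le {σ R : Type*} [CommSemiring R] {p : MvPolynomial σ R} {i : σ}
    {k : ℕ} (h : ∀ d ∈ p.support, k ≤ d i) : X i ^ k ∣ p := by
  rw [p.as_sum]
  refine Finset.dvd_sum fun d hd => ?_
  rw [X_pow_eq_monomial, monomial_dvd_monomial]
  exact ⟨Or.inr (Finsupp.single_le_iff.2 (h d hd)), one_dvd _⟩

theorem X_pow_dvd_sub_monomial {σ R : Type*} [CommRing R] {p : MvPolynomial σ R} {i : σ} {k : ℕ}
    {d : σ →₀ ℕ} (h : ∀ e ∈ p.support, e ≠ d → k ≤ e i) :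
    X i ^ k ∣ p - monomial d (coeff d p) := by
  classical
  refine X_pow_dvd_of_forall_le fun e he => ?_
  rw [mem_support_iff, coeff_sub, coeff_monomial] at he
  rcases eq_or_ne d e with rfl | hne
  · simp at he
  · exact h e (by simpa [hne] using he) hne.symm

theorem eq_zero_of_forall_X_pow_dvd {σ R : Type*} [CommRing R] [IsDomain R]
    {p : MvPolynomial σ R} {i : σ} (h : ∀ k, X i ^ k ∣ p) : p = 0 := by
  by_contra hp
  obtain ⟨q, hq⟩ := h (p.totalDegree + 1)
  have hq0 : q ≠ 0 := by rintro rfl; exact hp (by simpa using hq)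
  have := congrArg totalDegree hq
  rw [totalDegree_mul_of_isDomain (pow_ne_zero _ (X_ne_zero i)) hq0, totalDegree_X_pow] at this
  omega

theorem monomial_fin_two {R : Type*} [CommSemiring R] {i j : Fin 2} (hij : i ≠ j)
    (d : Fin 2 →₀ ℕ) (c : R) : monomial d c = C c * X i ^ d i * X j ^ d j := by
  rw [monomial_eq, Finsupp.prod_fintype _ _ (by simp), Fin.prod_univ_two]
  fin_cases i <;> fin_cases j <;> simp_all <;> ring

theorem hessDet_of_ne {i j : Fin 2} (hij : i ≠ j) (φ : MvPolynomial (Fin 2) ℝ) :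
    hessDet φ = pderiv i (pderiv i φ) * pderiv j (pderiv j φ) - pderiv i (pderiv j φ) ^ 2 := by
  have hcomm : pderiv (0 : Fin 2) (pderiv 1 φ) = pderiv 1 (pderiv 0 φ) := by
    ext d
    simp [coeff_pderiv, add_right_comm]
    ring
  fin_cases i <;> fin_cases j <;> simp_all [hessDet]
  ring

theorem X_mul_pderiv_of_eq {i j : Fin 2} (hij : i ≠ j) {c : ℝ} {a m k : ℕ}
    {φ G : MvPolynomial (Fin 2) ℝ} (h : φ = C c * X i ^ a * X j ^ m + X j ^ k * G) :
    X i * pderiv i φ = C (c * a) * X i ^ a * X j ^ m + X j ^ k * (X i * pderiv i G) ∧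
      X j * pderiv j φ =
        C (c * m) * X i ^ a * X j ^ m + X j ^ k * ((k : MvPolynomial (Fin 2) ℝ) * G + X j * pderiv j G) := by
  subst h
  constructor
  · rcases a with _ | a <;>
      simp [pderiv_X_of_ne hij.symm] <;> ring
  · rcases m with _ | m <;> rcases k with _ | k <;>
      simp [pderiv_X_of_ne hij] <;> ring

theorem eq_zero_or_of_hessDet_eq_zero {i j : Fin 2} (hij : i ≠ j) {c : ℝ} (hc : c ≠ 0) {a m : ℕ}
    {φ G : MvPolynomial (Fin 2) ℝ} (h : φ = C c * X i ^ a * X j ^ m + X j ^ (m + 1) * G)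
    (hω : hessDet φ = 0) : a = 0 ∨ m = 0 := by
  obtain ⟨hi, hj⟩ := X_mul_pderiv_of_eq hij h
  obtain ⟨hii, -⟩ := X_mul_pderiv_of_eq hij hi
  obtain ⟨hji, hjj⟩ := X_mul_pderiv_of_eq hij hj
  rw [pderiv_mul, pderiv_X_self] at hii hjj
  rw [pderiv_mul, pderiv_X_of_ne hij.symm] at hji
  rw [hessDet_of_ne hij] at hω
  generalize X i * pderiv i G = G₁ at *
  generalize (((m + 1 : ℕ) : MvPolynomial (Fin 2) ℝ) * G + X j * pderiv j G) = G₂ at *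
  generalize X i * pderiv i G₁ = G₃ at *
  generalize X i * pderiv i G₂ = G₄ at *
  generalize (((m + 1 : ℕ) : MvPolynomial (Fin 2) ℝ) * G₂ + X j * pderiv j G₂) = G₅ at *
  have e₁ : X i ^ 2 * pderiv i (pderiv i φ) =
      X j ^ m * (C (c * a * a - c * a) * X i ^ a + X j * (G₃ - G₁)) := by
    rw [map_sub]; linear_combination hii - hi
  have e₂ : X j ^ 2 * pderiv j (pderiv j φ) =
      X j ^ m * (C (c * m * m - c * m) * X i ^ a + X j * (G₅ - G₂)) := by
    rw [map_sub]; linear_combination hjj - hj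
  have e₃ : X i * X j * pderiv i (pderiv j φ) =
      X j ^ m * (C (c * m * a) * X i ^ a + X j * G₄) := by
    linear_combination hji
  have key : (X j ^ m) ^ 2 *
      ((C (c * a * a - c * a) * X i ^ a + X j * (G₃ - G₁)) *
        (C (c * m * m - c * m) * X i ^ a + X j * (G₅ - G₂)) -
        (C (c * m * a) * X i ^ a + X j * G₄) ^ 2) = 0 := by
    linear_combination (X i ^ 2 * X j ^ 2) * hω - X j ^ 2 * pderiv j (pderiv j φ) * e₁ -
      (X j ^ m * (C (c * a * a - c * a) * X i ^ a + X j * (G₃ - G₁))) * e₂ +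
      (X i * X j * pderiv i (pderiv j φ) + X j ^ m * (C (c * m * a) * X i ^ a + X j * G₄)) * e₃
  have key' := (mul_eq_zero.1 key).resolve_left (pow_ne_zero _ (pow_ne_zero _ (X_ne_zero j)))
  have hdvd : X j ∣ monomial (Finsupp.single i (2 * a))
      ((c * a * a - c * a) * (c * m * m - c * m) - (c * m * a) ^ 2) := by
    rw [← C_mul_X_pow_eq_monomial, map_sub, map_mul, map_pow]
    refine ⟨-((G₃ - G₁) * (C (c * m * m - c * m) * X i ^ a + X j * (G₅ - G₂)) +
      C (c * a * a - c * a) * X i ^ a * (G₅ - G₂) -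
      2 * C (c * m * a) * X i ^ a * G₄ - X j * G₄ ^ 2), ?_⟩
    linear_combination key'
  rw [X_dvd_monomial] at hdvd
  have h0 := hdvd.resolve_right (by simp [hij.symm])
  have h1 : c ^ 2 * (a * m * (1 - a - m)) = 0 := by linear_combination h0
  rcases a with _ | a
  · simp
  rcases m with _ | m
  · simp
  exfalso
  have : (1 : ℝ) - (a + 1 : ℕ) - (m + 1 : ℕ) ≠ 0 := by
    push_cast
    have : (0 : ℝ) ≤ a := a.cast_nonneg
    have : (0 : ℝ) ≤ m := m.cast_nonneg
    linarith
  simp [hc] at h1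
  rcases h1 with (h1 | h1) | h1
  · exact (by positivity : (a : ℝ) + 1 ≠ 0) h1
  · exact (by positivity : (m : ℝ) + 1 ≠ 0) h1
  · exact this (by push_cast; linear_combination h1)

theorem X_dvd_of_hessDet_eq_zero {i j : Fin 2} (hij : i ≠ j) {c : ℝ} (hc : c ≠ 0) (l : ℝ) {n k : ℕ}
    {φ G : MvPolynomial (Fin 2) ℝ}
    (h : φ = C c * (X i + C l * X j) ^ (n + 2) + X j ^ (k + 2) * G)
    (hω : hessDet φ = 0) : X j ∣ G := by
  have hL : ¬ X j ∣ (X i + C l * X j : MvPolynomial (Fin 2) ℝ) := by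
    rw [dvd_add_left (dvd_mul_left _ _), X_dvd_X]
    exact hij.symm
  set L : MvPolynomial (Fin 2) ℝ := X i + C l * X j with hLdef
  have hLi : pderiv i L = 1 := by simp [hLdef, pderiv_X_of_ne hij.symm]
  have hLj : pderiv j L = C l := by simp [hLdef, pderiv_X_of_ne hij]
  have hp (r : Fin 2) : pderiv r (2 : MvPolynomial (Fin 2) ℝ) = 0 :=
    (pderiv r).map_natCast 2
  obtain ⟨N, hN⟩ : ∃ N : MvPolynomial (Fin 2) ℝ, N = n := ⟨_, rfl⟩
  obtain ⟨K, hK⟩ : ∃ K : MvPolynomial (Fin 2) ℝ, K = k := ⟨_, rfl⟩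
  rw [hessDet_of_ne hij] at hω
  obtain ⟨P, hP⟩ : ∃ P, pderiv i (pderiv i φ) =
      C c * (N + 2) * (N + 1) * L ^ n + X j ^ (k + 1) * P := by
    refine ⟨X j * pderiv i (pderiv i G), ?_⟩
    subst h
    simp [pderiv_X_of_ne hij.symm, hLi, hp, hN]
    ring
  obtain ⟨Q, hQ⟩ : ∃ Q, pderiv i (pderiv j φ) =
      C c * (N + 2) * (N + 1) * C l * L ^ n + X j ^ (k + 1) * Q := by
    refine ⟨(K + 2) * pderiv i G + X j * pderiv i (pderiv j G), ?_⟩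
    subst h
    simp [pderiv_X_of_ne hij.symm, hLi, hLj, hp, hN, hK]
    ring
  obtain ⟨S, hS⟩ : ∃ S, pderiv j (pderiv j φ) =
      C c * (N + 2) * (N + 1) * C l ^ 2 * L ^ n + X j ^ k * ((K + 2) * (K + 1) * G + X j * S) := by
    refine ⟨2 * (K + 2) * pderiv j G + X j * pderiv j (pderiv j G), ?_⟩
    subst h
    simp [hLj, hp, hN, hK]
    ring
  rw [hP, hQ, hS] at hω
  have hdvd : X j ∣ C (c * (n + 2) * (n + 1) * (k + 2) * (k + 1)) * (L ^ n * G) := by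
    have hC : (C (c * (n + 2) * (n + 1) * (k + 2) * (k + 1)) : MvPolynomial (Fin 2) ℝ) =
        C c * (N + 2) * (N + 1) * (K + 2) * (K + 1) := by
      simp [hN, hK, show (C 2 : MvPolynomial (Fin 2) ℝ) = 2 from map_ofNat C 2]
    rw [hC]
    refine ⟨-(C c * (N + 2) * (N + 1) * L ^ n * S +
      P * (C c * (N + 2) * (N + 1) * C l ^ 2 * L ^ n +
        X j ^ k * ((K + 2) * (K + 1) * G + X j * S)) -
      2 * Q * C c * (N + 2) * (N + 1) * C l * L ^ n - X j ^ (k + 1) * Q ^ 2), ?_⟩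
    refine mul_left_cancel₀ (pow_ne_zero k (X_ne_zero j)) ?_
    linear_combination hω
  rcases X_dvd_mul_iff.1 hdvd with h1 | h1
  · rw [← monomial_zero', X_dvd_monomial] at h1
    have : c * (n + 2) * (n + 1) * (k + 2) * (k + 1) ≠ 0 := by positivity
    simp_all
  · exact (X_dvd_mul_iff.1 h1).resolve_left fun h2 => hL (X_prime.dvd_of_dvd_pow h2)

theorem eq_C_mul_pow_of_hessDet_eq_zero {i j : Fin 2} (hij : i ≠ j) {c : ℝ} (hc : c ≠ 0) (l : ℝ)
    {n : ℕ} (hn : 2 ≤ n) {φ : MvPolynomial (Fin 2) ℝ}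
    (h : X j ^ 2 ∣ φ - C c * (X i + C l * X j) ^ n) (hω : hessDet φ = 0) :
    φ = C c * (X i + C l * X j) ^ n := by
  obtain ⟨n, rfl⟩ := Nat.exists_eq_add_of_le' hn
  have hk (k : ℕ) : X j ^ (k + 2) ∣ φ - C c * (X i + C l * X j) ^ (n + 2) := by
    induction k with
    | zero => exact h
    | succ k ih =>
      obtain ⟨G, hG⟩ := ih
      obtain ⟨H, rfl⟩ := X_dvd_of_hessDet_eq_zero hij hc l (eq_add_of_sub_eq' hG) hω
      exact ⟨H, by rw [hG]; ring⟩
  exact sub_eq_zero.1 (eq_zero_of_forall_X_pow_dvd fun k => (pow_dvd_pow _ (by omega)).trans (hk k))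

theorem weight_eq_one {φ : MvPolynomial (Fin 2) ℝ} {κ₁ κ₂ : ℝ}
    (h : ∀ σ > (0 : ℝ), ∀ z₁ z₂ : ℝ,
      eval ![σ ^ κ₁ * z₁, σ ^ κ₂ * z₂] φ = σ * eval ![z₁, z₂] φ)
    {d : Fin 2 →₀ ℕ} (hd : d ∈ φ.support) : κ₁ * d 0 + κ₂ * d 1 = 1 := by
  classical
  have hpoly : ∑ e ∈ φ.support,
      monomial e (((2 : ℝ) ^ κ₁) ^ e 0 * ((2 : ℝ) ^ κ₂) ^ e 1 * coeff e φ) = C 2 * φ := by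
    refine funext fun z => ?_
    have hz := h 2 two_pos (z 0) (z 1)
    have hz' : ![z 0, z 1] = z := by ext i; fin_cases i <;> rfl
    rw [hz'] at hz
    rw [map_mul, eval_C, ← hz, map_sum, eval_eq']
    refine Finset.sum_congr rfl fun e _ => ?_
    simp [eval_monomial, Finsupp.prod_fintype, mul_pow]
    ring
  have hco := congrArg (coeff d) hpoly
  simp only [coeff_sum, coeff_monomial, Finset.sum_ite_eq', hd, if_true, coeff_C_mul] at hco
  have h2 := mul_right_cancel₀ (mem_support_iff.1 hd) hco
  rw [← Real.rpow_mul_natCast two_pos.le, ← Real.rpow_mul_natCast two_pos.le,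
    ← Real.rpow_add two_pos] at h2
  have := (Real.rpow_right_inj two_pos (by norm_num)).1 (h2.trans (Real.rpow_one 2).symm)
  exact this

theorem finsupp_ext_of_ne {M : Type*} [Zero M] {i j : Fin 2} (hij : i ≠ j) {d e : Fin 2 →₀ M}
    (hi : d i = e i) (hj : d j = e j) : d = e := by
  ext r
  fin_cases i <;> fin_cases j <;> fin_cases r <;> simp_all

theorem pow_or_pow_or_exists_of_hessDet_eq_zero {i j : Fin 2} (hij : i ≠ j) {κ μ : ℝ} (hκ : 0 < κ)
    (hμ : 0 < μ) {φ : MvPolynomial (Fin 2) ℝ} (hφ : φ ≠ 0)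
    (hw : ∀ d ∈ φ.support, κ * d i + μ * d j = 1) (hlin : eval ![(0 : ℝ), 0] (pderiv i φ) = 0)
    (hω : hessDet φ = 0) :
    (∃ (c : ℝ) (n : ℕ), φ = C c * X i ^ n) ∨ (∃ (c : ℝ) (n : ℕ), φ = C c * X j ^ n) ∨
      ∃ n a : ℕ, 2 ≤ n ∧ κ * n = 1 ∧ coeff (Finsupp.single i n) φ ≠ 0 ∧ κ * a + μ = 1 := by
  obtain ⟨d, hd, hmin⟩ := φ.support.exists_min_image (fun d => d j) (support_nonempty.2 hφ)
  have hc : coeff d φ ≠ 0 := mem_support_iff.1 hd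
  have huniq : ∀ e ∈ φ.support, e j = d j → e = d := fun e he hej => by
    have h1 := hw e he
    have h2 := hw d hd
    rw [hej, ← h2, add_left_inj, mul_right_inj' hκ.ne', Nat.cast_inj] at h1
    exact finsupp_ext_of_ne hij h1 hej
  obtain ⟨G, hG⟩ := X_pow_dvd_sub_monomial (p := φ) (i := j) (k := d j + 1) (d := d)
    fun e he hne => lt_of_le_of_ne (hmin e he) fun h => hne (huniq e he h.symm)
  rw [monomial_fin_two hij, sub_eq_iff_eq_add'] at hG
  rcases eq_zero_or_of_hessDet_eq_zero hij hc hG hω with h0 | h0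
  · refine Or.inr (Or.inl ⟨coeff d φ, d j, ?_⟩)
    have hall : ∀ e ∈ φ.support, e = d := fun e he => by
      refine huniq e he (le_antisymm ?_ (hmin e he))
      have h1 := hw e he
      have h2 := hw d hd
      rw [h0, Nat.cast_zero, mul_zero, zero_add] at h2
      have h3 : μ * e j ≤ μ * d j := by
        rw [h2, ← h1]
        exact le_add_of_nonneg_left (by positivity)
      exact_mod_cast le_of_mul_le_mul_left h3 hμ
    have := sub_eq_zero.1 (eq_zero_of_forall_X_pow_dvd (i := j) fun k =>
      X_pow_dvd_sub_monomial (p := φ) (k := k) (d := d) fun e he hne => absurd (hall e he) hne)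
    simpa [monomial_fin_two hij, h0] using this
  · have hds : d = Finsupp.single i (d i) :=
      finsupp_ext_of_ne hij (by simp) (by simp [h0, hij])
    have hκd : κ * d i = 1 := by simpa [h0] using hw d hd
    have hd0 : d i ≠ 0 := fun h => by simp [h] at hκd
    have hd1 : d i ≠ 1 := fun h => by
      have hv : ![(0 : ℝ), 0] = 0 := by ext r; fin_cases r <;> rfl
      rw [hv, eval_zero, constantCoeff_eq, coeff_pderiv] at hlin
      rw [hds, h] at hc
      exact hc (by simpa using hlin)
    have hd2 : 2 ≤ d i := by omega
    by_cases hf : ∃ f ∈ φ.support, f j = 1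
    · obtain ⟨f, hf, hfj⟩ := hf
      refine Or.inr (Or.inr ⟨d i, f i, hd2, hκd, hds ▸ hc, ?_⟩)
      simpa [hfj] using hw f hf
    · push Not at hf
      refine Or.inl ⟨coeff d φ, d i, ?_⟩
      have hdvd := X_pow_dvd_sub_monomial (p := φ) (i := j) (k := 2) (d := d) fun e he hne => by
        have h1 := hf e he
        have h2 : e j ≠ 0 := fun h => hne (huniq e he (h.trans h0.symm))
        omega
      have := eq_C_mul_pow_of_hessDet_eq_zero hij hc 0 hd2 (φ := φ)
        (by simpa [monomial_fin_two hij, h0] using hdvd) hω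
      simpa using this

theorem eq_C_mul_pow_of_isHomogeneous {φ : MvPolynomial (Fin 2) ℝ} {n : ℕ} (hn : 2 ≤ n)
    (hw : ∀ d ∈ φ.support, d 0 + d 1 = n) (hc : coeff (Finsupp.single 0 n) φ ≠ 0)
    (hω : hessDet φ = 0) :
    ∃ c l : ℝ, φ = C c * (X 0 + C l * X 1) ^ n := by
  classical
  have h01 : (0 : Fin 2) ≠ 1 := by decide
  set c := coeff (Finsupp.single 0 n) φ with hcdef
  set p := φ - monomial (Finsupp.single 0 n) c with hp
  set d : Fin 2 →₀ ℕ := Finsupp.single 0 (n - 1) + Finsupp.single 1 1 with hd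
  obtain ⟨G, hG⟩ := X_pow_dvd_sub_monomial (p := p) (i := 1) (k := 2) (d := d) fun e he hne => by
    rw [mem_support_iff, hp, coeff_sub, coeff_monomial] at he
    have hne' : Finsupp.single 0 n ≠ e := by
      rintro rfl
      simp [hcdef] at he
    have h1 := hw e (by simpa [hne'] using he)
    by_contra! hlt
    obtain h | h : e 1 = 0 ∨ e 1 = 1 := by omega
    · exact hne' (finsupp_ext_of_ne h01 (by simp; omega) (by simp [h]))
    · exact hne (finsupp_ext_of_ne h01 (by simp [hd]; omega) (by simp [hd, h]))
  obtain ⟨q, hq⟩ := Polynomial.powAddExpansion (X 0 : MvPolynomial (Fin 2) ℝ)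
    (C (coeff d p / (n * c)) * X 1) n
  have hn0 : (n : ℝ) ≠ 0 := by positivity
  have hl : C c * (n : MvPolynomial (Fin 2) ℝ) * C (coeff d p / (n * c)) = C (coeff d p) := by
    rw [← map_natCast (C : ℝ →+* MvPolynomial (Fin 2) ℝ), ← map_mul, ← map_mul]
    congr 1
    field_simp
  refine ⟨c, coeff d p / (n * c), eq_C_mul_pow_of_hessDet_eq_zero h01 hc _ hn ?_ hω⟩
  refine ⟨G - C c * q * C (coeff d p / (n * c)) ^ 2, ?_⟩
  have hd0 : d 0 = n - 1 := by simp [hd]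
  have hd1 : d 1 = 1 := by simp [hd]
  rw [monomial_fin_two h01, hd0, hd1] at hG
  have hp' : p = φ - C c * X 0 ^ n := by simp [hp, monomial_fin_two h01]
  rw [hq]
  linear_combination hG - hp' - X 0 ^ (n - 1) * X 1 * hl

/-- If φ is a mixed homogeneous polynomial on ℝ² with ∇φ(0) = 0 and vanishing Hessian
determinant, then φ is a constant multiple of z₁^J, z₂^J, or (z₁ + λz₂)^J. -/
theorem stmt_6 (φ : MvPolynomial (Fin 2) ℝ)
    (hmh : ∃ κ₁ κ₂ : ℝ, 0 < κ₁ ∧ 0 < κ₂ ∧ ∀ σ > (0 : ℝ), ∀ z₁ z₂ : ℝ,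
      eval ![σ ^ κ₁ * z₁, σ ^ κ₂ * z₂] φ = σ * eval ![z₁, z₂] φ)
    (hgrad₁ : eval ![(0 : ℝ), 0] (pderiv 0 φ) = 0)
    (hgrad₂ : eval ![(0 : ℝ), 0] (pderiv 1 φ) = 0)
    (hω : hessDet φ = 0) :
    ∃ (c : ℝ) (J : ℕ),
      φ = C c * X 0 ^ J ∨ φ = C c * X 1 ^ J ∨
      ∃ lam : ℝ, φ = C c * (X 0 + C lam * X 1) ^ J := by
  obtain ⟨κ₁, κ₂, hκ₁, hκ₂, h⟩ := hmh
  have hw : ∀ d ∈ φ.support, κ₁ * d 0 + κ₂ * d 1 = 1 := fun d hd => weight_eq_one h hd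
  by_cases hφ : φ = 0
  · exact ⟨0, 0, Or.inl (by simp [hφ])⟩
  rcases pow_or_pow_or_exists_of_hessDet_eq_zero (by decide : (0 : Fin 2) ≠ 1) hκ₁ hκ₂ hφ hw hgrad₁
    hω with ⟨c, n, hc⟩ | ⟨c, n, hc⟩ | ⟨n, a, hn, hκn, hcn, ha⟩
  · exact ⟨c, n, Or.inl hc⟩
  · exact ⟨c, n, Or.inr (Or.inl hc)⟩
  rcases pow_or_pow_or_exists_of_hessDet_eq_zero (by decide : (1 : Fin 2) ≠ 0) hκ₂ hκ₁ hφ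
    (fun d hd => (add_comm _ _).trans (hw d hd)) hgrad₂
    hω with ⟨c, n, hc⟩ | ⟨c, n, hc⟩ | ⟨m, b, -, hκm, -, hb⟩
  · exact ⟨c, n, Or.inr (Or.inl hc)⟩
  · exact ⟨c, n, Or.inl hc⟩
  have e₁ : a * m + n = n * m := by
    have : (a * m + n : ℝ) = n * m := by
      linear_combination (n * m : ℝ) * ha - (a * m : ℝ) * hκn - (n : ℝ) * hκm
    exact_mod_cast this
  have e₂ : b * n + m = n * m := by
    have : (b * n + m : ℝ) = n * m := by
      linear_combination (n * m : ℝ) * hb - (b * n : ℝ) * hκm - (m : ℝ) * hκn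
    exact_mod_cast this
  have hnm : n = m := Nat.dvd_antisymm
    ((Nat.dvd_add_right (dvd_mul_left n b)).1 (e₂ ▸ dvd_mul_right n m))
    ((Nat.dvd_add_right (dvd_mul_left m a)).1 (e₁ ▸ dvd_mul_left m n))
  subst hnm
  obtain ⟨c, l, hcl⟩ := eq_C_mul_pow_of_isHomogeneous hn (fun d hd => by
    have : (d 0 + d 1 : ℝ) = n := by
      linear_combination (n : ℝ) * hw d hd - (d 0 : ℝ) * hκn - (d 1 : ℝ) * hκm
    exact_mod_cast this) hcn hω
  exact ⟨c, n, Or.inr (Or.inr ⟨l, hcl⟩)⟩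
end

section
/- Let φ: ℝ² → ℝ be a homogeneous polynomial of degree J ≥ 2 with ∇φ(0) = 0 which is not of the form C(λ₁z₁ + λ₂z₂)^J for any C ∈ ℝ, λ₁, λ₂ ∈ ℂ. Then every real linear form that divides the Hessian determinant ω := det D²φ with multiplicity strictly greater than J − 2 also divides φ. (Equivalently: for homogeneous φ satisfying these hypotheses, if the maximal multiplicity T of a real factor of ω exceeds d_ω = J − 2, then the corresponding factor f_T is linear and has multiplicity at least 1 in φ.) -/
open MvPolynomial

theorem MvPolynomial.derivative_aeval {R σ : Type*} [CommRing R] [Fintype σ]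
    (g : σ → Polynomial R) (φ : MvPolynomial σ R) :
    Polynomial.derivative (aeval g φ) =
      ∑ i, aeval g (pderiv i φ) * Polynomial.derivative (g i) := by
  classical
  induction φ using MvPolynomial.induction_on with
  | C r => simp [Polynomial.algebraMap_eq]
  | add p q hp hq => simp [hp, hq, add_mul, Finset.sum_add_distrib]
  | mul_X p j hp =>
    simp only [map_mul, aeval_X, Polynomial.derivative_mul, hp, Derivation.leibniz, pderiv_X,
      smul_eq_mul, map_add, add_mul, Finset.sum_add_distrib, Finset.sum_mul]
    rw [add_comm]
    refine congrArg₂ (· + ·) ?_ ?_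
    · simp [Pi.single_apply, apply_ite]
    · exact Finset.sum_congr rfl fun i _ => by ring

theorem MvPolynomial.IsHomogeneous.aeval_mul_left {R S σ : Type*} [CommSemiring R]
    [CommSemiring S] [Algebra R S] {φ : MvPolynomial σ R} {n : ℕ} (hφ : φ.IsHomogeneous n)
    (w : S) (f : σ → S) :
    MvPolynomial.aeval (fun i => w * f i) φ = w ^ n * MvPolynomial.aeval f φ := by
  simp only [MvPolynomial.aeval_def, MvPolynomial.eval₂_eq, Finset.mul_sum]
  refine Finset.sum_congr rfl fun d hd => ?_
  rw [hφ.degree_eq_sum_deg_support hd, ← Finset.prod_pow_eq_pow_sum]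
  simp only [mul_pow, Finset.prod_mul_distrib]
  ring

/-- A binary form vanishing on the kernel of a nonzero linear form is divisible by it. -/
theorem MvPolynomial.linear_dvd_of_isHomogeneous {K : Type*} [Field K]
    {φ : MvPolynomial (Fin 2) K} {n : ℕ} (hφ : φ.IsHomogeneous n) {a b u₀ u₁ : K}
    (hu : a * u₀ + b * u₁ = 1) (hv : eval ![-b, a] φ = 0) :
    (C a * X 0 + C b * X 1 : MvPolynomial (Fin 2) K) ∣ φ := by
  set l : MvPolynomial (Fin 2) K := C a * X 0 + C b * X 1 with hl
  let π := Ideal.Quotient.mkₐ K (Ideal.span {l})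
  let w : MvPolynomial (Fin 2) K := C u₀ * X 1 - C u₁ * X 0
  have hC : (C a * C u₀ + C b * C u₁ : MvPolynomial (Fin 2) K) = 1 := by
    rw [← C_mul, ← C_mul, ← C_add, hu, C_1]
  have hX : ∀ i, π (X i) = π (w * C (![-b, a] i)) := by
    intro i
    refine Ideal.Quotient.eq.2 (Ideal.mem_span_singleton.2 ?_)
    fin_cases i
    · refine ⟨C u₀, ?_⟩
      simp only [w, hl, Fin.zero_eta, Matrix.cons_val_zero, C_neg]
      linear_combination (-X 0) * hC
    · refine ⟨C u₁, ?_⟩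
      simp only [w, hl, Fin.mk_one, Matrix.cons_val_one, Matrix.cons_val_fin_one]
      linear_combination (-X 1) * hC
  have h : π φ = π (aeval (fun i => w * C (![-b, a] i)) φ) := by
    have e : π = π.comp (aeval (fun i => w * C (![-b, a] i))) := by
      ext i
      simpa using hX i
    exact DFunLike.congr_fun e φ
  rw [hφ.aeval_mul_left] at h
  have h0 : aeval (fun i => (C (![-b, a] i) : MvPolynomial (Fin 2) K)) φ = 0 := by
    have := aeval_algebraMap_apply (MvPolynomial (Fin 2) K) ![-b, a] φ
    simp only [MvPolynomial.algebraMap_eq, aeval_eq_eval] at this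
    simpa only [hv, C_0] using! this
  rw [h0, mul_zero, map_zero] at h
  exact Ideal.mem_span_singleton.1 (Ideal.Quotient.eq_zero_iff_mem.1 h)

/-- If `p` has degree at most `J`, with `p(0) ≠ 0` and `p'(0) = 0`, then `A p p'' - B p' ^ 2` can
vanish to order `J - 1` at zero only when `p` is constant. -/
theorem Polynomial.eq_C_of_X_pow_dvd {K : Type*} [Field K] [CharZero K] {p : Polynomial K}
    {J : ℕ} (hdeg : p.natDegree ≤ J) (h0 : p.coeff 0 ≠ 0) (h1 : p.coeff 1 = 0)
    (A B : K) (hA : A ≠ 0)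
    (hdvd : Polynomial.X ^ (J - 1) ∣ Polynomial.C A * (p * derivative (derivative p)) -
      Polynomial.C B * derivative p ^ 2) :
    p = Polynomial.C (p.coeff 0) := by
  have key : ∀ k, 1 ≤ k → k ≤ J → p.coeff k = 0 := by
    intro k
    induction k using Nat.strong_induction_on with
    | _ k ih =>
      intro hk1 hkJ
      obtain rfl | hk2 := hk1.eq_or_lt
      · exact h1
      obtain ⟨m, rfl⟩ : ∃ m, k = m + 2 := ⟨k - 2, by omega⟩
      have hc := Polynomial.X_pow_dvd_iff.1 hdvd m (by omega)
      have e1 : (p * derivative (derivative p)).coeff m =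
          p.coeff 0 * (derivative (derivative p)).coeff m := by
        rw [Polynomial.coeff_mul]
        refine Finset.sum_eq_single (0, m) (fun x hx hne => ?_) (by simp)
        rw [Finset.HasAntidiagonal.mem_antidiagonal] at hx
        have : x.1 ≠ 0 := fun h => hne (Prod.ext h (by simp; omega))
        rw [ih x.1 (by omega) (by omega) (by omega), zero_mul]
      have e2 : (derivative p ^ 2).coeff m = 0 := by
        rw [sq, Polynomial.coeff_mul]
        refine Finset.sum_eq_zero fun x hx => ?_
        rw [Finset.HasAntidiagonal.mem_antidiagonal] at hx
        rw [Polynomial.coeff_derivative, ih (x.1 + 1) (by omega) (by omega) (by omega)]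
        simp
      rw [Polynomial.coeff_sub, Polynomial.coeff_C_mul, Polynomial.coeff_C_mul, e1, e2,
        Polynomial.coeff_derivative, Polynomial.coeff_derivative, mul_zero, sub_zero] at hc
      have n1 : ((m : K) + 1) ≠ 0 := by exact_mod_cast m.succ_ne_zero
      have n2 : (((m + 1 : ℕ) : K) + 1) ≠ 0 := by exact_mod_cast (m + 1).succ_ne_zero
      simpa only [mul_eq_zero, hA, h0, n1, n2, false_or, or_false] using hc
  ext k
  rw [Polynomial.coeff_C]
  split_ifs with hk
  · rw [hk]
  · by_cases hkJ : k ≤ J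
    · exact key k (by omega) hkJ
    · exact Polynomial.coeff_eq_zero_of_natDegree_lt (by omega)

/-- The Hessian determinant of a binary form along a line, by Euler's identities. -/
theorem hessDet_along_line {φ : MvPolynomial (Fin 2) ℝ} {J : ℕ} (hJ : 1 ≤ J)
    (hφ : φ.IsHomogeneous J) (v₀ v₁ u₀ u₁ : ℝ) {p : Polynomial ℝ} {g : Fin 2 → Polynomial ℝ}
    (hg : g = ![Polynomial.C v₀ + Polynomial.C u₀ * Polynomial.X,
      Polynomial.C v₁ + Polynomial.C u₁ * Polynomial.X])
    (hp : p = aeval g φ) :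
    Polynomial.C (J * (J - 1) : ℝ) * (p * Polynomial.derivative (Polynomial.derivative p)) -
      Polynomial.C ((J - 1) ^ 2 : ℝ) * Polynomial.derivative p ^ 2 =
      Polynomial.C ((v₀ * u₁ - v₁ * u₀) ^ 2) * aeval g (hessDet φ) := by
  have hcomm : pderiv 1 (pderiv 0 φ) = pderiv 0 (pderiv 1 φ) := by
    have h : ⁅pderiv (R := ℝ) (1 : Fin 2), pderiv (R := ℝ) (0 : Fin 2)⁆ = 0 := by
      ext i
      fin_cases i <;> simp [Derivation.commutator_apply, pderiv_X]
    have := DFunLike.congr_fun h φ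
    rwa [Derivation.commutator_apply, Derivation.zero_apply, sub_eq_zero] at this
  have euler : ∀ i, g 0 * aeval g (pderiv 0 (pderiv i φ)) + g 1 * aeval g (pderiv 1 (pderiv i φ)) =
      Polynomial.C ((J : ℝ) - 1) * aeval g (pderiv i φ) := by
    intro i
    have := congrArg (aeval g) (hφ.pderiv (i := i)).sum_X_mul_pderiv
    simpa [Fin.sum_univ_two, Nat.cast_sub hJ] using this
  have euler₀ : g 0 * aeval g (pderiv 0 φ) + g 1 * aeval g (pderiv 1 φ) =
      Polynomial.C (J : ℝ) * p := by
    have := congrArg (aeval g) hφ.sum_X_mul_pderiv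
    simpa [Fin.sum_univ_two, hp] using this
  have hg0 : Polynomial.derivative (g 0) = Polynomial.C u₀ := by simp [hg]
  have hg1 : Polynomial.derivative (g 1) = Polynomial.C u₁ := by simp [hg]
  have hd : Polynomial.derivative p =
      aeval g (pderiv 0 φ) * Polynomial.C u₀ + aeval g (pderiv 1 φ) * Polynomial.C u₁ := by
    simp [hp, MvPolynomial.derivative_aeval, Fin.sum_univ_two, hg0, hg1]
  have hdd : Polynomial.derivative (Polynomial.derivative p) =
      (aeval g (pderiv 0 (pderiv 0 φ)) * Polynomial.C u₀ +
        aeval g (pderiv 0 (pderiv 1 φ)) * Polynomial.C u₁) * Polynomial.C u₀ +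
      (aeval g (pderiv 0 (pderiv 1 φ)) * Polynomial.C u₀ +
        aeval g (pderiv 1 (pderiv 1 φ)) * Polynomial.C u₁) * Polynomial.C u₁ := by
    rw [hd]
    simp [MvPolynomial.derivative_aeval, Fin.sum_univ_two, hg0, hg1, hcomm]
  have e0 := euler 0
  have e1 := euler 1
  rw [hcomm] at e0
  have hdet : (Polynomial.C v₀ * Polynomial.C u₁ - Polynomial.C v₁ * Polynomial.C u₀ :
      Polynomial ℝ) = g 0 * Polynomial.C u₁ - g 1 * Polynomial.C u₀ := by
    simp only [hg, Matrix.cons_val_zero, Matrix.cons_val_one, Matrix.cons_val_fin_one]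
    ring
  simp only [hessDet, map_sub, map_mul, map_pow, hdet]
  simp only [map_sub] at e0 e1
  rw [hdd, hd]
  generalize Polynomial.C u₀ = U₀ at *
  generalize Polynomial.C u₁ = U₁ at *
  generalize aeval g (pderiv 0 (pderiv 0 φ)) = a at *
  generalize aeval g (pderiv 0 (pderiv 1 φ)) = b at *
  generalize aeval g (pderiv 1 (pderiv 1 φ)) = c at *
  generalize aeval g (pderiv 0 φ) = x at *
  generalize aeval g (pderiv 1 φ) = y at *
  generalize g 0 = G₀ at *
  generalize g 1 = G₁ at *
  generalize Polynomial.C (J : ℝ) = j at *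
  generalize (Polynomial.C 1 : Polynomial ℝ) = o at *
  have h1 : j * (j - o) * p = G₀ ^ 2 * a + 2 * G₀ * G₁ * b + G₁ ^ 2 * c := by
    linear_combination (-(j - o)) * euler₀ - G₀ * e0 - G₁ * e1
  have h2 : (j - o) * (x * U₀ + y * U₁) = (G₀ * a + G₁ * b) * U₀ + (G₀ * b + G₁ * c) * U₁ := by
    linear_combination (-U₀) * e0 - U₁ * e1
  calc _ = (j * (j - o) * p) * ((a * U₀ + b * U₁) * U₀ + (b * U₀ + c * U₁) * U₁) -
        ((j - o) * (x * U₀ + y * U₁)) ^ 2 := by ring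
    _ = _ := by rw [h1, h2]; ring

/-- For a homogeneous polynomial φ of degree J ≥ 2 with ∇φ(0) = 0 which is not of the form
C(λ₁z₁ + λ₂z₂)^J (λ₁, λ₂ ∈ ℂ), every real linear form dividing the Hessian determinant ω
with multiplicity strictly greater than J − 2 also divides φ. -/
theorem stmt_8 (φ : MvPolynomial (Fin 2) ℝ) (J : ℕ) (hJ : 2 ≤ J)
    (hhom : φ.IsHomogeneous J)
    (hgrad₁ : eval ![(0 : ℝ), 0] (pderiv 0 φ) = 0)
    (hgrad₂ : eval ![(0 : ℝ), 0] (pderiv 1 φ) = 0)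
    (hnotpow : ¬ ∃ (c : ℝ) (l₁ l₂ : ℂ),
      MvPolynomial.map (algebraMap ℝ ℂ) φ =
        C ((c : ℂ)) * (C l₁ * X 0 + C l₂ * X 1) ^ J) :
    ∀ a b : ℝ, ¬ (a = 0 ∧ b = 0) → ∀ n : ℕ, J - 2 < n →
      (C a * X 0 + C b * X 1 : MvPolynomial (Fin 2) ℝ) ^ n ∣ hessDet φ →
      (C a * X 0 + C b * X 1 : MvPolynomial (Fin 2) ℝ) ∣ φ := by
  intro a b hab n hn hdvd
  have hN : a ^ 2 + b ^ 2 ≠ 0 := fun h => hab ⟨by nlinarith [sq_nonneg a, sq_nonneg b],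
    by nlinarith [sq_nonneg a, sq_nonneg b]⟩
  have hbase : a * (a / (a ^ 2 + b ^ 2)) + b * (b / (a ^ 2 + b ^ 2)) = 1 := by
    field_simp
  by_contra hndvd
  have hv : eval ![-b, a] φ ≠ 0 := fun h => hndvd (linear_dvd_of_isHomogeneous hhom hbase h)
  have hJ0 : (J : ℝ) ≠ 0 := by positivity
  have hJ1 : (J : ℝ) - 1 ≠ 0 := by
    have : (2 : ℝ) ≤ J := by exact_mod_cast hJ
    linarith
  have heuler : -b * eval ![-b, a] (pderiv 0 φ) + a * eval ![-b, a] (pderiv 1 φ) =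
      J * eval ![-b, a] φ := by
    simpa [Fin.sum_univ_two] using congrArg (eval ![-b, a]) hhom.sum_X_mul_pderiv
  -- a direction `u` transverse to the kernel `(-b, a)` along which `φ` is stationary at `(-b, a)`
  obtain ⟨u₀, u₁, hu, hstat⟩ : ∃ u₀ u₁ : ℝ, a * u₀ + b * u₁ = 1 ∧
      eval ![-b, a] (pderiv 0 φ) * u₀ + eval ![-b, a] (pderiv 1 φ) * u₁ = 0 := by
    set x := eval ![-b, a] (pderiv 0 φ)
    set y := eval ![-b, a] (pderiv 1 φ)
    have hxy : -b * x + a * y ≠ 0 := heuler ▸ mul_ne_zero hJ0 hv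
    refine ⟨y / (-b * x + a * y), -x / (-b * x + a * y), ?_, by ring⟩
    rw [← div_self hxy]
    ring
  let g : Fin 2 → Polynomial ℝ := ![Polynomial.C (-b) + Polynomial.C u₀ * Polynomial.X,
      Polynomial.C a + Polynomial.C u₁ * Polynomial.X]
  let p : Polynomial ℝ := aeval g φ
  have heval : ∀ (ψ : MvPolynomial (Fin 2) ℝ) (t : ℝ),
      (aeval g ψ).eval t = eval ![-b + u₀ * t, a + u₁ * t] ψ := by
    intro ψ t
    have h := map_aeval g (Polynomial.evalRingHom t) ψ
    rw [Polynomial.coe_evalRingHom] at h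
    rw [h]
    have hid : (Polynomial.evalRingHom t).comp (algebraMap ℝ (Polynomial ℝ)) = RingHom.id ℝ := by
      ext
      simp
    rw [hid]
    change eval _ ψ = _
    congr 2
    ext i
    fin_cases i <;> simp [g]
  have hgl : aeval g (C a * X 0 + C b * X 1 : MvPolynomial (Fin 2) ℝ) = Polynomial.X := by
    have hC := congrArg Polynomial.C hu
    simp only [map_add, map_mul, map_one] at hC
    simp only [g, map_add, map_mul, aeval_X, algHom_C, Polynomial.algebraMap_eq,
      Matrix.cons_val_zero, Matrix.cons_val_one, Matrix.cons_val_fin_one, map_neg]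
    linear_combination Polynomial.X * hC
  have hconst : p = Polynomial.C (p.coeff 0) := by
    refine Polynomial.eq_C_of_X_pow_dvd (J := J) ?_ ?_ ?_ (J * (J - 1) : ℝ)
      ((J - 1) ^ 2 : ℝ) (mul_ne_zero hJ0 hJ1) ?_
    · have := aeval_natDegree_le (n := 1) φ hhom.totalDegree_le g ?_
      · simpa using this
      · intro i
        fin_cases i <;> simp only [g, Fin.zero_eta, Fin.mk_one, Matrix.cons_val_zero,
          Matrix.cons_val_one, Matrix.cons_val_fin_one] <;> compute_degree
    · simpa [p, Polynomial.coeff_zero_eq_eval_zero, heval] using hv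
    · have h : (Polynomial.derivative p).eval 0 = 0 := by
        simp only [p, MvPolynomial.derivative_aeval, Fin.sum_univ_two,
          Polynomial.eval_add, Polynomial.eval_mul, heval]
        simpa [g] using hstat
      simpa [← Polynomial.coeff_zero_eq_eval_zero, Polynomial.coeff_derivative] using h
    · rw [hessDet_along_line (by omega) hhom (-b) a u₀ u₁ (g := g) rfl rfl]
      refine Dvd.dvd.mul_left ((pow_dvd_pow _ (by omega : J - 1 ≤ n)).trans ?_) _
      simpa only [map_pow, hgl] using map_dvd (aeval g) hdvd
  set c := p.coeff 0
  -- `φ = c m ^ J` where `m` is the linear form vanishing at `u` and equal to one at `(-b, a)`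
  let m : MvPolynomial (Fin 2) ℝ := C (-u₁) * X 0 + C u₀ * X 1
  have hm0 : m ≠ 0 := by
    intro h
    have := congrArg (eval ![-b, a]) h
    simp only [m, map_add, map_mul, eval_C, eval_X, Matrix.cons_val_zero, Matrix.cons_val_one,
      Matrix.cons_val_fin_one, map_zero] at this
    linarith
  have hpow : φ = C c * m ^ J := by
    refine mul_left_cancel₀ hm0 (MvPolynomial.funext fun z => ?_)
    rw [map_mul, map_mul]
    set s := eval z m with hs
    have hsz : s = -u₁ * z 0 + u₀ * z 1 := by simp [hs, m]
    by_cases h0 : s = 0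
    · simp [h0]
    congr 1
    have hz : z = fun i => s * ![-b + u₀ * ((a * z 0 + b * z 1) / s),
        a + u₁ * ((a * z 0 + b * z 1) / s)] i := by
      ext i
      fin_cases i
      · simp only [Fin.zero_eta, Matrix.cons_val_zero]
        field_simp
        rw [hsz]
        linear_combination (-z 0) * hu
      · simp only [Fin.mk_one, Matrix.cons_val_one, Matrix.cons_val_fin_one]
        field_simp
        rw [hsz]
        linear_combination (-z 1) * hu
    have hφz : eval z φ = s ^ J * c := by
      have h := hhom.aeval_mul_left s ![-b + u₀ * ((a * z 0 + b * z 1) / s),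
        a + u₁ * ((a * z 0 + b * z 1) / s)]
      rw [← hz] at h
      simp only [aeval_eq_eval, ← heval] at h
      change eval z φ = s ^ J * p.eval _ at h
      rw [h, hconst, Polynomial.eval_C]
    rw [hφz, map_mul, map_pow, eval_C, ← hs, mul_comm]
  exact hnotpow ⟨c, ((-u₁ : ℝ) : ℂ), (u₀ : ℂ), by simp [hpow, m]⟩
end

section
/- Define T f(x) := ∫_{ℝ²} f(x₁ − t₁, x₂ − t₂, x₃ − (t₂ − t₁²)³) dt₁ dt₂ for x ∈ ℝ³, i.e. the averaging operator over all of ℝ² associated to φ(t₁,t₂) = (t₂ − t₁²)³. Then there is a constant C < ∞ such that ‖Tf‖_{L³(ℝ³)} ≤ C ‖f‖_{L^{3/2}(ℝ³)} for all nonnegative measurable f; that is, T is bounded from L^{3/2}(ℝ³) to L³(ℝ³). -/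
open MeasureTheory MvPolynomial
open scoped ENNReal

/-- The averaging operator `T_R f(x) = ∫_R f(x₁ − t₁, x₂ − t₂, x₃ − φ(t)) dt`
acting on nonnegative measurable functions on ℝ³. -/
noncomputable def avgOp (φ : ℝ × ℝ → ℝ) (R : Set (ℝ × ℝ))
    (f : ℝ × ℝ × ℝ → ℝ≥0∞) (x : ℝ × ℝ × ℝ) : ℝ≥0∞ :=
  ∫⁻ t in R, f (x.1 - t.1, x.2.1 - t.2, x.2.2 - φ t)

/-- The bilinear pairing `⟨T_R χ_E, χ_F⟩`. -/
noncomputable def pairing (φ : ℝ × ℝ → ℝ) (R : Set (ℝ × ℝ))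
    (E F : Set (ℝ × ℝ × ℝ)) : ℝ≥0∞ :=
  ∫⁻ x, avgOp φ R (E.indicator 1) x * F.indicator 1 x

/-- `T_R` is of restricted weak type `(p,q)`, written in terms of the reciprocals
`pinv = 1/p`, `qinv = 1/q` (so `1 ≤ p, q ≤ ∞` corresponds to `pinv, qinv ∈ [0,1]`):
there is `C < ∞` with `⟨T_R χ_E, χ_F⟩ ≤ C |E|^{1/p} |F|^{1−1/q}` for all measurable
`E, F ⊆ ℝ³` of finite measure. -/
def RWT (φ : ℝ × ℝ → ℝ) (R : Set (ℝ × ℝ)) (pinv qinv : ℝ) : Prop :=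
  ∃ C : ℝ, 0 ≤ C ∧ ∀ E F : Set (ℝ × ℝ × ℝ), MeasurableSet E → MeasurableSet F →
    volume E < ⊤ → volume F < ⊤ →
    pairing φ R E F ≤ ENNReal.ofReal C * volume E ^ pinv * volume F ^ (1 - qinv)

/-- The unit square `[−1,1]²` in ℝ². -/
def unitSquare : Set (ℝ × ℝ) := Set.Icc ((-1, -1) : ℝ × ℝ) (1, 1)

theorem lintegral_comp_mul_left_real (F : ℝ → ℝ≥0∞) (hF : Measurable F) {c : ℝ} (hc : c ≠ 0) :
    ∫⁻ y, F (c * y) = ENNReal.ofReal |c|⁻¹ * ∫⁻ x, F x := by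
  rw [← lintegral_map hF (measurable_const_mul c), Real.map_volume_mul_left hc,
    lintegral_smul_measure, abs_inv, smul_eq_mul]

theorem lintegral_comp_affine (F : ℝ → ℝ≥0∞) (hF : Measurable F) {c : ℝ} (hc : c ≠ 0) (d : ℝ) :
    ∫⁻ y, F (c * y + d) = ENNReal.ofReal |c|⁻¹ * ∫⁻ x, F x := by
  rw [lintegral_comp_mul_left_real (fun z => F (z + d)) (by fun_prop) hc,
    lintegral_add_right_eq_self]

theorem lintegral_comp_abs (φ : ℝ → ℝ≥0∞) :
    ∫⁻ x, φ |x| = 2 * ∫⁻ x in Set.Ioi 0, φ x := by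
  have h1 : ∫⁻ x in Set.Ioi (0 : ℝ), φ |x| = ∫⁻ x in Set.Ioi 0, φ x :=
    setLIntegral_congr_fun measurableSet_Ioi fun x hx => by
      simp only [abs_of_pos (Set.mem_Ioi.1 hx)]
  have h2 : ∫⁻ x in Set.Iio (0 : ℝ), φ |x| = ∫⁻ x in Set.Ioi 0, φ |x| := by
    rw [← lintegral_indicator measurableSet_Iio, ← lintegral_indicator measurableSet_Ioi,
      ← lintegral_neg_eq_self]
    congr 1 with x
    simp [Set.indicator]
  rw [← lintegral_add_compl _ measurableSet_Ioi (A := Set.Ioi (0 : ℝ)), Set.compl_Ioi,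
    ← setLIntegral_congr Iio_ae_eq_Iic, h2, h1, two_mul]

theorem lintegral_cube_substitution (Φ : ℝ → ℝ≥0∞) :
    ∫⁻ x : ℝ, ENNReal.ofReal (3 * x ^ 2) * Φ (x ^ 3) = ∫⁻ p, Φ p := by
  have hodd : Odd 3 := by decide
  have h := lintegral_image_eq_lintegral_abs_deriv_mul (s := Set.univ)
    (f := fun x : ℝ => x ^ 3) (f' := fun x => 3 * x ^ 2) MeasurableSet.univ
    (fun x _ => by simpa using hasDerivAt_pow 3 x)
    hodd.strictMono_pow.injective.injOn Φ
  have hs : Function.Surjective (fun x : ℝ => x ^ 3) := by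
    refine Continuous.surjective (by fun_prop) ?_ ?_
    · exact Filter.tendsto_pow_atTop (by norm_num)
    · have := Filter.tendsto_neg_atTop_atBot.comp
        ((Filter.tendsto_pow_atTop (α := ℝ) (n := 3) (by norm_num)).comp
          Filter.tendsto_neg_atBot_atTop)
      refine this.congr fun x => ?_
      simp [hodd.neg_pow]
  rw [Set.image_univ, hs.range_eq, Measure.restrict_univ] at h
  rw [h]
  congr 1 with x
  rw [abs_of_nonneg (by positivity)]

theorem lintegral_abs_rpow_ball_lt_top {a : ℝ} (ha : a < 1) (r : ℝ) :
    ∫⁻ x : ℝ, (Set.Iio r).indicator (fun x => ENNReal.ofReal (x ^ (-a))) |x| < ∞ := by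
  rw [lintegral_comp_abs]
  refine ENNReal.mul_lt_top (by simp) ?_
  rw [lintegral_indicator measurableSet_Iio, Measure.restrict_restrict measurableSet_Iio,
    Set.inter_comm, Set.Ioi_inter_Iio]
  rcases le_or_gt r 0 with hr | hr
  · simp [Set.Ioo_eq_empty_of_le hr]
  · exact ((intervalIntegral.integrableOn_Ioo_rpow_iff hr).2 (by linarith)).setLIntegral_lt_top

theorem lintegral_abs_rpow_compl_ball_lt_top {a : ℝ} (ha : 1 < a) {r : ℝ} (hr : 0 < r) :
    ∫⁻ x : ℝ, (Set.Ioi r).indicator (fun x => ENNReal.ofReal (x ^ (-a))) |x| < ∞ := by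
  rw [lintegral_comp_abs]
  refine ENNReal.mul_lt_top (by simp) ?_
  rw [lintegral_indicator measurableSet_Ioi, Measure.restrict_restrict measurableSet_Ioi,
    Set.inter_eq_left.2 (Set.Ioi_subset_Ioi hr.le)]
  exact (integrableOn_Ioi_rpow_of_lt (by linarith) hr).setLIntegral_lt_top

theorem lintegral_abs_rpow_mul_abs_sub_one_rpow_lt_top {a b : ℝ} (ha : a < 1)
    (hb : b < 1) (hab : 1 < a + b) :
    ∫⁻ x : ℝ, ENNReal.ofReal (|x| ^ (-a) * |x - 1| ^ (-b)) < ∞ := by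
  set φ := fun x : ℝ => (Set.Iio (1 / 2)).indicator (fun x => ENNReal.ofReal (x ^ (-a))) |x|
  set ψ := fun x : ℝ => (Set.Iio (1 / 2)).indicator (fun x => ENNReal.ofReal (x ^ (-b))) |x|
  set χ := fun x : ℝ => (Set.Ioi (1 / 3)).indicator (fun x => ENNReal.ofReal (x ^ (-(a + b)))) |x|
  have hφ : Measurable φ := by
    refine Measurable.comp (Measurable.indicator (by fun_prop) measurableSet_Iio) (by fun_prop)
  have hψ : Measurable ψ := by
    refine Measurable.comp (Measurable.indicator (by fun_prop) measurableSet_Iio) (by fun_prop)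
  have hψ' : Measurable fun x => ψ (x - 1) := by fun_prop
  have key : ∀ x : ℝ, ENNReal.ofReal (|x| ^ (-a) * |x - 1| ^ (-b)) ≤
      ENNReal.ofReal ((1 / 2) ^ (-b)) * φ x + ENNReal.ofReal ((1 / 2) ^ (-a)) * ψ (x - 1)
        + ENNReal.ofReal ((1 / 3) ^ (-b)) * χ x := by
    intro x
    have h1 : 1 ≤ |x| + |x - 1| := by
      have := abs_sub_abs_le_abs_sub 1 (1 - x)
      rw [abs_sub_comm 1 x] at this
      simp at this
      linarith
    have h2 : |x| ≤ |x - 1| + 1 := by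
      have := abs_add_le (x - 1) 1
      simpa using this
    rcases lt_or_ge |x| (1 / 2) with hx | hx
    · refine le_add_right (le_add_right ?_)
      simp only [φ, Set.indicator_of_mem (Set.mem_Iio.2 hx)]
      rw [← ENNReal.ofReal_mul (by positivity), mul_comm]
      gcongr ENNReal.ofReal (?_ * _)
      exact Real.rpow_le_rpow_of_nonpos (by norm_num) (by linarith) (by linarith)
    rcases lt_or_ge |x - 1| (1 / 2) with hy | hy
    · refine le_add_right (le_add_left ?_)
      simp only [ψ, Set.indicator_of_mem (Set.mem_Iio.2 hy)]
      rw [← ENNReal.ofReal_mul (by positivity)]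
      gcongr ENNReal.ofReal (?_ * _)
      exact Real.rpow_le_rpow_of_nonpos (by norm_num) (by linarith) (by linarith)
    · refine le_add_left ?_
      have hx' : |x| ∈ Set.Ioi (1 / 3 : ℝ) := Set.mem_Ioi.2 (by linarith)
      have hx0 : 0 < |x| := by linarith
      simp only [χ, Set.indicator_of_mem hx']
      rw [← ENNReal.ofReal_mul (by positivity), neg_add, Real.rpow_add hx0, mul_left_comm,
        ← Real.mul_rpow (by norm_num) hx0.le]
      gcongr ENNReal.ofReal (_ * ?_)
      exact Real.rpow_le_rpow_of_nonpos (by positivity) (by linarith) (by linarith)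
  refine (lintegral_mono key).trans_lt ?_
  rw [lintegral_add_left (by fun_prop), lintegral_add_left (by fun_prop),
    lintegral_const_mul' _ _ (by simp), lintegral_const_mul' _ _ (by simp),
    lintegral_const_mul' _ _ (by simp), lintegral_sub_right_eq_self]
  have h1 := lintegral_abs_rpow_ball_lt_top ha (1 / 2)
  have h2 := lintegral_abs_rpow_ball_lt_top hb (1 / 2)
  have h3 := lintegral_abs_rpow_compl_ball_lt_top hab (r := 1 / 3) (by norm_num)
  exact ENNReal.add_lt_top.2 ⟨ENNReal.add_lt_top.2 ⟨ENNReal.mul_lt_top (by simp) h1,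
    ENNReal.mul_lt_top (by simp) h2⟩, ENNReal.mul_lt_top (by simp) h3⟩

theorem exists_lintegral_abs_rpow_mul_abs_sub_rpow_le {a b : ℝ} (ha : a < 1)
    (hb : b < 1) (hab : 1 < a + b) :
    ∃ K : ℝ≥0∞, K < ∞ ∧ ∀ c : ℝ, c ≠ 0 →
      ∫⁻ x : ℝ, ENNReal.ofReal (|x| ^ (-a) * |x - c| ^ (-b))
        = ENNReal.ofReal (|c| ^ (1 - a - b)) * K := by
  refine ⟨_, lintegral_abs_rpow_mul_abs_sub_one_rpow_lt_top ha hb hab, fun c hc => ?_⟩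
  have hc0 : 0 < |c| := abs_pos.2 hc
  have h := lintegral_comp_mul_left_real
    (fun x => ENNReal.ofReal (|x| ^ (-a) * |x - c| ^ (-b))) (by fun_prop) hc
  have h' : ∀ y : ℝ, ENNReal.ofReal (|c * y| ^ (-a) * |c * y - c| ^ (-b)) =
      ENNReal.ofReal (|c| ^ (-a - b)) * ENNReal.ofReal (|y| ^ (-a) * |y - 1| ^ (-b)) := by
    intro y
    rw [← ENNReal.ofReal_mul (by positivity), show c * y - c = c * (y - 1) by ring, abs_mul,
      abs_mul, Real.mul_rpow hc0.le (abs_nonneg _), Real.mul_rpow hc0.le (abs_nonneg _),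
      sub_eq_add_neg (-a), Real.rpow_add hc0]
    ring_nf
  simp only [h'] at h
  rw [lintegral_const_mul' _ _ (by simp)] at h
  have h3 : ENNReal.ofReal |c| * ENNReal.ofReal |c|⁻¹ = 1 := by
    rw [← ENNReal.ofReal_mul hc0.le, mul_inv_cancel₀ hc0.ne', ENNReal.ofReal_one]
  rw [← one_mul (lintegral _ _), ← h3, mul_assoc, ← h, ← mul_assoc,
    ← ENNReal.ofReal_mul hc0.le]
  congr 2
  rw [show 1 - a - b = 1 + (-a - b) by ring, Real.rpow_add hc0, Real.rpow_one]

theorem sq_lintegral_le_of_one_le_mul {α : Type*} [MeasurableSpace α] {μ : Measure α}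
    {G ω V : α → ℝ≥0∞} (hG : Measurable G) (hω : Measurable ω) (hV : Measurable V)
    (h : ∀ᵐ x ∂μ, 1 ≤ ω x * V x) :
    (∫⁻ x, G x ∂μ) ^ 2 ≤ (∫⁻ x, ω x ∂μ) * ∫⁻ x, V x * G x ^ 2 ∂μ := by
  have hle : ∫⁻ x, G x ∂μ ≤
      ∫⁻ x, ((fun x => ω x ^ (1 / 2 : ℝ)) * fun x => (V x * G x ^ 2) ^ (1 / 2 : ℝ)) x ∂μ := by
    refine lintegral_mono_ae (h.mono fun x hx => ?_)
    rw [Pi.mul_apply, ← ENNReal.mul_rpow_of_nonneg _ _ (by norm_num), ← mul_assoc]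
    calc G x = (1 * G x ^ 2) ^ (1 / 2 : ℝ) := by
          rw [one_mul, ← ENNReal.rpow_natCast, ← ENNReal.rpow_mul]
          norm_num
      _ ≤ _ := by gcongr
  have hH := ENNReal.lintegral_mul_le_Lp_mul_Lq μ Real.HolderConjugate.two_two
    (hω.pow_const (1 / 2 : ℝ)).aemeasurable
    ((hV.mul (hG.pow_const 2)).pow_const (1 / 2 : ℝ)).aemeasurable
  have h2 : ∀ y : ℝ≥0∞, (y ^ (1 / 2 : ℝ)) ^ (2 : ℝ) = y := fun y => by
    rw [← ENNReal.rpow_mul]; norm_num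
  simp only [Pi.mul_apply, h2] at hH hle
  calc (∫⁻ x, G x ∂μ) ^ 2 ≤ _ := pow_le_pow_left' (hle.trans hH) 2
    _ = _ := by
      rw [mul_pow, ← ENNReal.rpow_natCast, ← ENNReal.rpow_natCast]
      simp only [Nat.cast_ofNat, h2]

theorem lintegral_le_of_le_of_split {g : ℝ → ℝ≥0∞} (hg : Measurable g) {l : ℝ≥0∞}
    (hl : ∀ u, g u ≤ l) {a R : ℝ} (ha : 0 < a) (hR : 0 < R) :
    ∫⁻ u, g u ≤ ENNReal.ofReal (2 * R) * l
      + ENNReal.ofReal a * (∫⁻ u, g u ^ (3 / 2 : ℝ) * ENNReal.ofReal |u|)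
      + ENNReal.ofReal (2 * (a ^ 2)⁻¹ * R⁻¹) := by
  set ψ := fun x : ℝ => (Set.Ioi R).indicator (fun x => ENNReal.ofReal (x ^ (-2 : ℝ))) |x|
  have key : ∀ u, g u ≤ (Set.Icc (-R) R).indicator (fun _ => l) u
      + ENNReal.ofReal a * (g u ^ (3 / 2 : ℝ) * ENNReal.ofReal |u|)
      + ENNReal.ofReal (a ^ 2)⁻¹ * ψ u := by
    intro u
    rcases le_or_gt |u| R with hu | hu
    · rw [Set.indicator_of_mem (Set.mem_Icc.2 (abs_le.1 hu))]
      exact le_add_right (le_add_right (hl u))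
    have hu0 : 0 < |u| := hR.trans hu
    rcases le_or_gt 1 (ENNReal.ofReal (a * |u|) * g u ^ (1 / 2 : ℝ)) with h1 | h1
    · refine le_add_right (le_add_left ?_)
      calc g u = g u * 1 := (mul_one _).symm
        _ ≤ g u * (ENNReal.ofReal (a * |u|) * g u ^ (1 / 2 : ℝ)) := by gcongr
        _ = _ := by
          rw [show (3 / 2 : ℝ) = 1 + 1 / 2 by norm_num,
            ENNReal.rpow_add_of_nonneg _ _ (by norm_num) (by norm_num), ENNReal.rpow_one,
            ENNReal.ofReal_mul ha.le]
          ring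
    · refine le_add_left ?_
      have h2 : g u ^ (1 / 2 : ℝ) ≤ (ENNReal.ofReal (a * |u|))⁻¹ := by
        rw [ENNReal.le_inv_iff_mul_le, mul_comm]
        exact h1.le
      simp only [ψ, Set.indicator_of_mem (Set.mem_Ioi.2 hu)]
      rw [← ENNReal.ofReal_mul (by positivity)]
      calc g u = (g u ^ (1 / 2 : ℝ)) ^ (2 : ℝ) := by rw [← ENNReal.rpow_mul]; norm_num
        _ ≤ ((ENNReal.ofReal (a * |u|))⁻¹) ^ (2 : ℝ) := by gcongr
        _ = _ := by
          rw [← ENNReal.ofReal_inv_of_pos (by positivity),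
            ENNReal.ofReal_rpow_of_pos (by positivity), Real.rpow_neg hu0.le]
          congr 1
          norm_cast
          rw [inv_pow, mul_pow, mul_inv]
  have hψ : Measurable ψ :=
    Measurable.comp (Measurable.indicator (by fun_prop) measurableSet_Ioi) (by fun_prop)
  refine (lintegral_mono key).trans_eq ?_
  rw [lintegral_add_right _ (by fun_prop), lintegral_add_right _ (by fun_prop),
    lintegral_const_mul' _ _ (by simp), lintegral_const_mul' _ _ (by simp)]
  congr 1
  · congr 1
    rw [lintegral_indicator_const measurableSet_Icc, Real.volume_Icc, mul_comm]
    congr 2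
    ring
  · rw [lintegral_comp_abs, lintegral_indicator measurableSet_Ioi,
      Measure.restrict_restrict measurableSet_Ioi,
      Set.inter_eq_left.2 (Set.Ioi_subset_Ioi hR.le),
      ← ofReal_integral_eq_lintegral_ofReal (integrableOn_Ioi_rpow_of_lt (by norm_num) hR),
      integral_Ioi_rpow_of_lt (by norm_num) hR]
    · rw [show (2 : ℝ≥0∞) = ENNReal.ofReal 2 by simp, ← ENNReal.ofReal_mul (by norm_num),
        ← ENNReal.ofReal_mul (by positivity)]
      congr 1
      norm_num [Real.rpow_neg hR.le]
      ring
    · exact (ae_restrict_mem measurableSet_Ioi).mono fun x hx =>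
        Real.rpow_nonneg (hR.trans (Set.mem_Ioi.1 hx)).le _

theorem sq_lintegral_le_of_le {g : ℝ → ℝ≥0∞} (hg : Measurable g) {l : ℝ≥0∞}
    (hl : ∀ u, g u ≤ l) :
    (∫⁻ u, g u) ^ 2 ≤
      25 * l ^ (1 / 2 : ℝ) * ∫⁻ u, g u ^ (3 / 2 : ℝ) * ENNReal.ofReal |u| := by
  set I := ∫⁻ u, g u ^ (3 / 2 : ℝ) * ENNReal.ofReal |u| with hI
  rcases eq_or_ne l 0 with rfl | hl0
  · have : ∀ u, g u = 0 := fun u => le_antisymm (hl u) zero_le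
    simp [this]
  rcases eq_or_ne I 0 with hI0 | hI0
  · rw [hI, lintegral_eq_zero_iff (by fun_prop)] at hI0
    have : g =ᵐ[volume] 0 := by
      filter_upwards [hI0, Measure.ae_ne volume (0 : ℝ)] with u hu hu0
      have h32 : ¬ (3 / 2 : ℝ) < 0 := by norm_num
      simpa [hu0, h32] using hu
    rw [lintegral_congr_ae this]
    simp
  rcases eq_or_ne I ⊤ with hIt | hIt
  · rw [hIt, ENNReal.mul_top (by simp [hl0])]
    exact le_top
  rcases eq_or_ne l ⊤ with rfl | hlt
  · rw [ENNReal.top_rpow_of_pos (by norm_num), ENNReal.mul_top (by norm_num),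
      ENNReal.top_mul hI0]
    exact le_top
  obtain ⟨j, hj, hjI⟩ : ∃ j : ℝ, 0 < j ∧ I = ENNReal.ofReal (j ^ 2) :=
    ⟨√I.toReal, Real.sqrt_pos.2 (ENNReal.toReal_pos hI0 hIt), by
      rw [Real.sq_sqrt ENNReal.toReal_nonneg, ENNReal.ofReal_toReal hIt]⟩
  obtain ⟨m, hm, hml⟩ : ∃ m : ℝ, 0 < m ∧ l = ENNReal.ofReal (m ^ 4) :=
    ⟨√(√l.toReal), Real.sqrt_pos.2 (Real.sqrt_pos.2 (ENNReal.toReal_pos hl0 hlt)), by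
      rw [show 4 = 2 * 2 from rfl, pow_mul, Real.sq_sqrt (Real.sqrt_nonneg _),
        Real.sq_sqrt ENNReal.toReal_nonneg, ENNReal.ofReal_toReal hlt]⟩
  have h := lintegral_le_of_le_of_split hg hl (a := m / j) (R := j / m ^ 3) (by positivity)
    (by positivity)
  rw [← hI, hjI, hml, ← ENNReal.ofReal_mul (by positivity), ← ENNReal.ofReal_mul (by positivity),
    ← ENNReal.ofReal_add (by positivity) (by positivity),
    ← ENNReal.ofReal_add (by positivity) (by positivity)] at h
  have he : 2 * (j / m ^ 3) * m ^ 4 + m / j * j ^ 2 + 2 * ((m / j) ^ 2)⁻¹ * (j / m ^ 3)⁻¹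
      = 5 * (j * m) := by
    field_simp
    ring
  rw [he] at h
  calc _ ≤ _ := pow_le_pow_left' h 2
    _ = _ := by
      rw [hml, hjI, ENNReal.ofReal_rpow_of_pos (by positivity), ← Real.sqrt_eq_rpow,
        show m ^ 4 = (m ^ 2) ^ 2 by ring, Real.sqrt_sq (by positivity),
        show (25 : ℝ≥0∞) = ENNReal.ofReal 25 by simp, ← ENNReal.ofReal_mul (by norm_num),
        ← ENNReal.ofReal_mul (by positivity), ← ENNReal.ofReal_pow (by positivity)]
      congr 1
      ring

theorem lintegral_pow_three_le {α : Type*} [MeasurableSpace α] {μ : Measure α} [SFinite μ]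
    {g : α → ℝ≥0∞} (hg : Measurable g) :
    (∫⁻ a, g a ∂μ) ^ 3 ≤
      3 * ∫⁻ a, g a * (∫⁻ b, {b | g b ≤ g a}.indicator g b ∂μ) ^ 2 ∂μ := by
  set t : α → α → ℝ≥0∞ := fun a b => {b | g b ≤ g a}.indicator g b
  have ht : Measurable fun p : α × α => t p.1 p.2 :=
    Measurable.ite (measurableSet_le (hg.comp measurable_snd) (hg.comp measurable_fst))
      (hg.comp measurable_snd) measurable_const
  have ht2 : ∀ {β : Type _} [MeasurableSpace β] {x y : β → α}, Measurable x → Measurable y →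
      Measurable fun p => t (x p) (y p) := fun hx hy => ht.comp (hx.prodMk hy)
  set Y : α → α → α → ℝ≥0∞ := fun a b c => g a * (t a b * t a c)
  have hY : Measurable fun p : α × α × α => Y p.1 p.2.1 p.2.2 :=
    (hg.comp measurable_fst).mul ((ht2 measurable_fst (measurable_fst.comp measurable_snd)).mul
      (ht2 measurable_fst (measurable_snd.comp measurable_snd)))
  have hY3 : ∀ {β : Type _} [MeasurableSpace β] {x y z : β → α}, Measurable x → Measurable y →
      Measurable z → Measurable fun p => Y (x p) (y p) (z p) :=
    fun hx hy hz => hY.comp (hx.prodMk (hy.prodMk hz))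
  have hX : ∫⁻ a, ∫⁻ b, ∫⁻ c, Y a b c ∂μ ∂μ ∂μ = ∫⁻ a, g a * (∫⁻ b, t a b ∂μ) ^ 2 ∂μ := by
    refine lintegral_congr fun a => ?_
    have hta : Measurable (t a) := ht2 measurable_const measurable_id
    simp only [Y]
    have : ∀ b, ∫⁻ c, g a * (t a b * t a c) ∂μ = (g a * ∫⁻ c, t a c ∂μ) * t a b := by
      intro b
      rw [lintegral_const_mul _ (by fun_prop), lintegral_const_mul _ hta]
      ring
    simp only [this]
    rw [lintegral_const_mul _ hta]
    ring
  have key : ∀ a b c, g a * (g b * g c) ≤ Y a b c + Y b a c + Y c a b := by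
    intro a b c
    simp only [Y, t, Set.indicator, Set.mem_ofPred_eq]
    rcases le_total (g a) (g b) with h1 | h1 <;> rcases le_total (g a) (g c) with h2 | h2 <;>
      rcases le_total (g b) (g c) with h3 | h3
    · refine le_add_left ?_
      rw [if_pos h2, if_pos h3]; exact (by ring : _ = _).le
    · refine le_add_right (le_add_left ?_)
      rw [if_pos h1, if_pos h3]; exact (by ring : _ = _).le
    · refine le_add_left ?_
      rw [if_pos (h1.trans h3), if_pos h3]; exact (by ring : _ = _).le
    · refine le_add_right (le_add_left ?_)
      rw [if_pos h1, if_pos h3]; exact (by ring : _ = _).le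
    · refine le_add_left ?_
      rw [if_pos h2, if_pos h3]; exact (by ring : _ = _).le
    · refine le_add_left ?_
      rw [if_pos h2, if_pos (h1.trans h2)]; exact (by ring : _ = _).le
    · refine le_add_right (le_add_right ?_)
      rw [if_pos h1, if_pos h2]
    · refine le_add_right (le_add_right ?_)
      rw [if_pos h1, if_pos h2]
  have m1 : ∀ a, Measurable fun b => ∫⁻ c, Y a b c ∂μ := fun a =>
    Measurable.lintegral_prod_right (hY3 (by fun_prop) (by fun_prop) (by fun_prop))
  have m2 : ∀ a, Measurable fun b => ∫⁻ c, Y b a c ∂μ := fun a =>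
    Measurable.lintegral_prod_right (hY3 (by fun_prop) (by fun_prop) (by fun_prop))
  calc (∫⁻ a, g a ∂μ) ^ 3 = ∫⁻ a, ∫⁻ b, ∫⁻ c, g a * (g b * g c) ∂μ ∂μ ∂μ := by
        have h1 : ∀ a b, ∫⁻ c, g a * (g b * g c) ∂μ = (g a * ∫⁻ c, g c ∂μ) * g b := by
          intro a b
          rw [lintegral_const_mul _ (by fun_prop), lintegral_const_mul _ hg]
          ring
        simp only [h1]
        have h2 : ∀ a, ∫⁻ b, (g a * ∫⁻ c, g c ∂μ) * g b ∂μ = (∫⁻ c, g c ∂μ) ^ 2 * g a := by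
          intro a
          rw [lintegral_const_mul _ hg]
          ring
        simp only [h2]
        rw [lintegral_const_mul _ hg]
        ring
    _ ≤ ∫⁻ a, ∫⁻ b, ∫⁻ c, (Y a b c + Y b a c + Y c a b) ∂μ ∂μ ∂μ := by
        gcongr with a b c
        exact key a b c
    _ = ∫⁻ a, ∫⁻ b, ∫⁻ c, Y a b c ∂μ ∂μ ∂μ + ∫⁻ a, ∫⁻ b, ∫⁻ c, Y b a c ∂μ ∂μ ∂μ
          + ∫⁻ a, ∫⁻ b, ∫⁻ c, Y c a b ∂μ ∂μ ∂μ := by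
        have e1 : ∀ a b, ∫⁻ c, (Y a b c + Y b a c + Y c a b) ∂μ =
            ∫⁻ c, Y a b c ∂μ + ∫⁻ c, Y b a c ∂μ + ∫⁻ c, Y c a b ∂μ := by
          intro a b
          rw [lintegral_add_left, lintegral_add_left]
          · exact hY3 (by fun_prop) (by fun_prop) (by fun_prop)
          · exact (hY3 (by fun_prop) (by fun_prop) (by fun_prop)).add
              (hY3 (by fun_prop) (by fun_prop) (by fun_prop))
        have e2 : ∀ a, ∫⁻ b, (∫⁻ c, Y a b c ∂μ + ∫⁻ c, Y b a c ∂μ + ∫⁻ c, Y c a b ∂μ) ∂μ =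
            ∫⁻ b, ∫⁻ c, Y a b c ∂μ ∂μ + ∫⁻ b, ∫⁻ c, Y b a c ∂μ ∂μ
              + ∫⁻ b, ∫⁻ c, Y c a b ∂μ ∂μ := by
          intro a
          refine (lintegral_add_left ((m1 a).add (m2 a)) _).trans ?_
          exact congrArg (· + _) (lintegral_add_left (m1 a) _)
        simp only [e1, e2]
        have n1 : Measurable fun a => ∫⁻ b, ∫⁻ c, Y a b c ∂μ ∂μ :=
          Measurable.lintegral_prod_right (Measurable.lintegral_prod_right
            (hY3 (by fun_prop) (by fun_prop) (by fun_prop)))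
        have n2 : Measurable fun a => ∫⁻ b, ∫⁻ c, Y b a c ∂μ ∂μ :=
          Measurable.lintegral_prod_right (Measurable.lintegral_prod_right
            (hY3 (by fun_prop) (by fun_prop) (by fun_prop)))
        refine (lintegral_add_left (n1.add n2) _).trans ?_
        exact congrArg (· + _) (lintegral_add_left n1 _)
    _ = 3 * ∫⁻ a, ∫⁻ b, ∫⁻ c, Y a b c ∂μ ∂μ ∂μ := by
        have s1 : ∫⁻ a, ∫⁻ b, ∫⁻ c, Y b a c ∂μ ∂μ ∂μ = ∫⁻ a, ∫⁻ b, ∫⁻ c, Y a b c ∂μ ∂μ ∂μ :=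
          lintegral_lintegral_swap (Measurable.lintegral_prod_right
            (hY3 (by fun_prop) (by fun_prop) (by fun_prop))).aemeasurable
        have s2 : ∫⁻ a, ∫⁻ b, ∫⁻ c, Y c a b ∂μ ∂μ ∂μ = ∫⁻ a, ∫⁻ b, ∫⁻ c, Y a b c ∂μ ∂μ ∂μ := by
          rw [← s1]
          refine lintegral_congr fun a => ?_
          exact lintegral_lintegral_swap
            (hY3 (by fun_prop) (by fun_prop) (by fun_prop)).aemeasurable
        rw [s1, s2]
        ring
    _ = _ := by rw [hX]

theorem lintegral_shear {Φ : ℝ × ℝ → ℝ≥0∞} (hΦ : Measurable Φ) :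
    ∫⁻ t, Φ t = ∫⁻ τ : ℝ, ∫⁻ σ : ℝ, Φ (τ, σ + τ ^ 2) := by
  rw [Measure.volume_eq_prod, lintegral_prod _ hΦ.aemeasurable]
  refine lintegral_congr fun τ => ?_
  rw [lintegral_add_right_eq_self (fun y => Φ (τ, y))]

theorem lintegral_reflected_shear {Φ : ℝ × ℝ → ℝ≥0∞} (hΦ : Measurable Φ) (τ : ℝ) :
    ∫⁻ t, Φ t = ∫⁻ s : ℝ, ∫⁻ u : ℝ, Φ (τ - u, s + (τ - u) ^ 2) := by
  rw [lintegral_shear hΦ, ← lintegral_sub_left_eq_self _ τ, lintegral_lintegral_swap]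
  exact (by fun_prop : Measurable _).aemeasurable

/-- The weight whose Cauchy–Schwarz dual is `cubeDualWeight`. -/
noncomputable def cubeWeight (σ s : ℝ) : ℝ≥0∞ :=
  ENNReal.ofReal (3 * s ^ 2) *
    (ENNReal.ofReal (|σ ^ 3| ^ (1 / 6 : ℝ)) *
      ENNReal.ofReal (|s ^ 3| ^ (-(5 / 6) : ℝ) * |s ^ 3 - σ ^ 3| ^ (-(1 / 3) : ℝ)))

noncomputable def cubeDualWeight (σ s : ℝ) : ℝ≥0∞ :=
  ENNReal.ofReal (3 * σ ^ 2) * (ENNReal.ofReal (3 * s ^ 2) *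
    (ENNReal.ofReal (|σ ^ 3 - s ^ 3| ^ (1 / 3 : ℝ)) *
      ENNReal.ofReal (|σ ^ 3| ^ (-(5 / 6) : ℝ) * |s ^ 3| ^ (-(1 / 2) : ℝ))))

theorem measurable_cubeWeight {β : Type*} [MeasurableSpace β] {x y : β → ℝ} (hx : Measurable x)
    (hy : Measurable y) : Measurable fun p => cubeWeight (x p) (y p) := by
  unfold cubeWeight
  fun_prop

theorem measurable_cubeDualWeight {β : Type*} [MeasurableSpace β] {x y : β → ℝ}
    (hx : Measurable x) (hy : Measurable y) :
    Measurable fun p => cubeDualWeight (x p) (y p) := by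
  unfold cubeDualWeight
  fun_prop

theorem one_le_cubeWeight_mul_cubeDualWeight {σ s : ℝ} (hσ : σ ≠ 0) (hs : s ≠ 0) (h : s ≠ σ) :
    1 ≤ cubeWeight σ s * cubeDualWeight σ s := by
  have hodd : Odd 3 := by decide
  have hd : 0 < |σ ^ 3 - s ^ 3| :=
    abs_pos.2 (sub_ne_zero.2 fun hc => h (hodd.strictMono_pow.injective hc).symm)
  have hσ3 : 0 < |σ ^ 3| := abs_pos.2 (pow_ne_zero 3 hσ)
  have hs3 : 0 < |s ^ 3| := abs_pos.2 (pow_ne_zero 3 hs)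
  have e : ∀ x : ℝ, x ≠ 0 → x ^ 2 = |x ^ 3| ^ (2 / 3 : ℝ) := fun x hx => by
    rw [abs_pow, ← Real.rpow_natCast |x| 3, ← Real.rpow_mul (abs_nonneg x), ← sq_abs]
    norm_num
  unfold cubeWeight cubeDualWeight
  rw [abs_sub_comm (s ^ 3), e σ hσ, e s hs]
  set A := |σ ^ 3|
  set B := |s ^ 3|
  set D := |σ ^ 3 - s ^ 3|
  simp only [← ENNReal.ofReal_mul (show (0 : ℝ) ≤ A ^ (1 / 6 : ℝ) by positivity),
    ← ENNReal.ofReal_mul (show (0 : ℝ) ≤ 3 * A ^ (2 / 3 : ℝ) by positivity),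
    ← ENNReal.ofReal_mul (show (0 : ℝ) ≤ 3 * B ^ (2 / 3 : ℝ) by positivity),
    ← ENNReal.ofReal_mul (show (0 : ℝ) ≤ D ^ (1 / 3 : ℝ) by positivity)]
  rw [← ENNReal.ofReal_mul (by positivity), ENNReal.one_le_ofReal]
  have eA : A ^ (1 / 6 : ℝ) * A ^ (2 / 3 : ℝ) * A ^ (-(5 / 6) : ℝ) = 1 := by
    rw [← Real.rpow_add hσ3, ← Real.rpow_add hσ3]; norm_num
  have eB : B ^ (2 / 3 : ℝ) * B ^ (-(5 / 6) : ℝ) * B ^ (2 / 3 : ℝ) * B ^ (-(1 / 2) : ℝ) = 1 := by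
    rw [← Real.rpow_add hs3, ← Real.rpow_add hs3, ← Real.rpow_add hs3]; norm_num
  have eD : D ^ (-(1 / 3) : ℝ) * D ^ (1 / 3 : ℝ) = 1 := by
    rw [← Real.rpow_add hd]; norm_num
  calc (1 : ℝ) ≤ 27 * ((A ^ (1 / 6 : ℝ) * A ^ (2 / 3 : ℝ) * A ^ (-(5 / 6) : ℝ)) *
        (B ^ (2 / 3 : ℝ) * B ^ (-(5 / 6) : ℝ) * B ^ (2 / 3 : ℝ) * B ^ (-(1 / 2) : ℝ)) *
        (D ^ (-(1 / 3) : ℝ) * D ^ (1 / 3 : ℝ))) := by rw [eA, eB, eD]; norm_num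
    _ = _ := by ring

theorem exists_lintegral_cubeWeight_le :
    ∃ K : ℝ≥0∞, K < ∞ ∧ ∀ σ : ℝ, σ ≠ 0 → ∫⁻ s, cubeWeight σ s ≤ K := by
  obtain ⟨K, hK, h⟩ := exists_lintegral_abs_rpow_mul_abs_sub_rpow_le (a := 5 / 6) (b := 1 / 3)
    (by norm_num) (by norm_num) (by norm_num)
  refine ⟨K, hK, fun σ hσ => le_of_eq ?_⟩
  have hσ3 : σ ^ 3 ≠ 0 := pow_ne_zero 3 hσ
  have hpos : 0 < |σ ^ 3| := abs_pos.2 hσ3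
  unfold cubeWeight
  rw [lintegral_cube_substitution fun q => ENNReal.ofReal (|σ ^ 3| ^ (1 / 6 : ℝ)) *
      ENNReal.ofReal (|q| ^ (-(5 / 6) : ℝ) * |q - σ ^ 3| ^ (-(1 / 3) : ℝ)),
    lintegral_const_mul' _ _ (by simp), h _ hσ3, ← mul_assoc, ← ENNReal.ofReal_mul (by positivity),
    ← Real.rpow_add hpos]
  norm_num

theorem exists_lintegral_cubeDualWeight_mul_le :
    ∃ K : ℝ≥0∞, K < ∞ ∧ ∀ H : ℝ → ℝ≥0∞, Measurable H →
      ∫⁻ σ, ∫⁻ s, cubeDualWeight σ s * H (σ ^ 3 - s ^ 3) ≤ K * ∫⁻ z, H z := by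
  obtain ⟨K, hK, h⟩ := exists_lintegral_abs_rpow_mul_abs_sub_rpow_le (a := 5 / 6) (b := 1 / 2)
    (by norm_num) (by norm_num) (by norm_num)
  refine ⟨K, hK, fun H hH => ?_⟩
  set v : ℝ → ℝ → ℝ≥0∞ := fun p q => ENNReal.ofReal (|p - q| ^ (1 / 3 : ℝ)) *
      ENNReal.ofReal (|p| ^ (-(5 / 6) : ℝ) * |q| ^ (-(1 / 2) : ℝ)) with hv
  calc ∫⁻ σ, ∫⁻ s, cubeDualWeight σ s * H (σ ^ 3 - s ^ 3)
      = ∫⁻ σ : ℝ, ENNReal.ofReal (3 * σ ^ 2) * ∫⁻ s : ℝ, ENNReal.ofReal (3 * s ^ 2) *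
          (v (σ ^ 3) (s ^ 3) * H (σ ^ 3 - s ^ 3)) := by
        refine lintegral_congr fun σ => ?_
        rw [← lintegral_const_mul' _ _ ENNReal.ofReal_ne_top]
        refine lintegral_congr fun s => ?_
        simp only [cubeDualWeight, hv]
        ring
    _ = ∫⁻ σ : ℝ, ENNReal.ofReal (3 * σ ^ 2) * ∫⁻ q, v (σ ^ 3) q * H (σ ^ 3 - q) := by
        refine lintegral_congr fun σ => ?_
        rw [lintegral_cube_substitution fun q => v (σ ^ 3) q * H (σ ^ 3 - q)]
    _ = ∫⁻ p, ∫⁻ q, v p q * H (p - q) :=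
        lintegral_cube_substitution fun p => ∫⁻ q, v p q * H (p - q)
    _ = ∫⁻ p, ∫⁻ c, v p (p - c) * H c := by
        refine lintegral_congr fun p => ?_
        rw [← lintegral_sub_left_eq_self _ p]
        simp
    _ = ∫⁻ c, ∫⁻ p, v p (p - c) * H c := by
        refine lintegral_lintegral_swap (Measurable.aemeasurable ?_)
        simp only [hv]
        fun_prop
    _ ≤ ∫⁻ c, K * H c := by
        refine lintegral_mono_ae ((Measure.ae_ne volume (0 : ℝ)).mono fun c hc => le_of_eq ?_)
        have hc0 : 0 < |c| := abs_pos.2 hc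
        rw [lintegral_mul_const _ (by simp only [hv]; fun_prop)]
        congr 1
        simp only [hv, sub_sub_cancel]
        rw [lintegral_const_mul' _ _ (by simp), h c hc, ← mul_assoc,
          ← ENNReal.ofReal_mul (by positivity), ← Real.rpow_add hc0]
        norm_num
    _ = K * ∫⁻ z, H z := lintegral_const_mul _ hH

/-- The surface `x₃ = (x₂ - x₁²)³`. -/
def cubicGraph (t : ℝ × ℝ) : ℝ × ℝ × ℝ := (t.1, t.2, (t.2 - t.1 ^ 2) ^ 3)

theorem measurable_cubicGraph : Measurable cubicGraph := by
  unfold cubicGraph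
  fun_prop

theorem lintegral_mul_abs_comp_affine_le {F : ℝ → ℝ≥0∞} (hF : Measurable F) (u d : ℝ) :
    ∫⁻ τ, F (2 * u * τ + d) * ENNReal.ofReal |u| ≤ ∫⁻ x, F x := by
  rcases eq_or_ne u 0 with rfl | hu
  · simp
  rw [lintegral_mul_const _ (by fun_prop), lintegral_comp_affine F hF (by simpa using hu), mul_comm,
    ← mul_assoc, ← ENNReal.ofReal_mul (abs_nonneg u)]
  refine mul_le_of_le_one_left zero_le (ENNReal.ofReal_le_one.2 ?_)
  have hu0 : 0 < |u| := abs_pos.2 hu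
  rw [abs_mul, abs_two]
  field_simp
  norm_num

theorem exists_lintegral_sq_lintegral_cubicGraph_sub_le :
    ∃ K : ℝ≥0∞, K < ∞ ∧ ∀ (g : ℝ × ℝ × ℝ → ℝ≥0∞) (l : ℝ≥0∞), Measurable g → (∀ x, g x ≤ l) →
      ∫⁻ t, (∫⁻ t', g (cubicGraph t - cubicGraph t')) ^ 2
        ≤ K * l ^ (1 / 2 : ℝ) * ∫⁻ x, g x ^ (3 / 2 : ℝ) := by
  obtain ⟨K₁, hK₁, hω⟩ := exists_lintegral_cubeWeight_le
  obtain ⟨K₂, hK₂, hV⟩ := exists_lintegral_cubeDualWeight_mul_le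
  refine ⟨K₁ * 25 * K₂, ENNReal.mul_lt_top (ENNReal.mul_lt_top hK₁ (by simp)) hK₂,
    fun g l hg hl => ?_⟩
  have hγ := measurable_cubicGraph
  set h : ℝ × ℝ × ℝ → ℝ≥0∞ := fun x => g x ^ (3 / 2 : ℝ) with hh
  have hhm : Measurable h := by fun_prop
  set A : ℝ → ℝ → ℝ → ℝ≥0∞ := fun τ σ s =>
    ∫⁻ u, g (u, 2 * u * τ + (σ - s - u ^ 2), σ ^ 3 - s ^ 3) with hA
  set B : ℝ → ℝ → ℝ → ℝ≥0∞ := fun τ σ s =>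
    ∫⁻ u, h (u, 2 * u * τ + (σ - s - u ^ 2), σ ^ 3 - s ^ 3) * ENNReal.ofReal |u| with hB
  set H : ℝ → ℝ≥0∞ := fun z => ∫⁻ u, ∫⁻ x, h (u, x, z) with hH
  have hHm : Measurable H := Measurable.lintegral_prod_right
    (f := fun z u => ∫⁻ x, h (u, x, z)) (Measurable.lintegral_prod_right (by fun_prop))
  have hAm : ∀ τ σ, Measurable (A τ σ) := fun τ σ =>
    Measurable.lintegral_prod_right (by fun_prop)
  have hBm : Measurable fun p : ℝ × ℝ × ℝ => B p.1 p.2.1 p.2.2 :=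
    Measurable.lintegral_prod_right (by fun_prop)
  have hAeq : ∀ τ σ, ∫⁻ t', g (cubicGraph (τ, σ + τ ^ 2) - cubicGraph t') = ∫⁻ s, A τ σ s := by
    intro τ σ
    rw [lintegral_reflected_shear (by fun_prop) τ]
    refine lintegral_congr fun s => lintegral_congr fun u => ?_
    congr 1
    simp only [cubicGraph, Prod.mk_sub_mk, Prod.mk.injEq]
    refine ⟨?_, ?_, ?_⟩ <;> ring
  have hAB : ∀ τ σ s, A τ σ s ^ 2 ≤ 25 * l ^ (1 / 2 : ℝ) * B τ σ s := fun τ σ s =>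
    sq_lintegral_le_of_le (by fun_prop) fun u => hl _
  have hBH : ∀ σ s, ∫⁻ τ, B τ σ s ≤ H (σ ^ 3 - s ^ 3) := by
    intro σ s
    simp only [hB, hH]
    rw [lintegral_lintegral_swap (Measurable.aemeasurable (by fun_prop))]
    exact lintegral_mono fun u =>
      lintegral_mul_abs_comp_affine_le (F := fun x => h (u, x, σ ^ 3 - s ^ 3)) (by fun_prop) u _
  have hHh : ∫⁻ z, H z = ∫⁻ x, h x := by
    rw [Measure.volume_eq_prod, lintegral_prod _ hhm.aemeasurable]
    simp only [hH]
    rw [lintegral_lintegral_swap]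
    · refine lintegral_congr fun u => ?_
      rw [Measure.volume_eq_prod, lintegral_prod_symm _ (by fun_prop)]
    · exact (Measurable.lintegral_prod_right (by fun_prop)).aemeasurable
  have hVm : ∀ {β : Type} [MeasurableSpace β] {x y : β → ℝ}, Measurable x → Measurable y →
    Measurable fun p => cubeDualWeight (x p) (y p) := measurable_cubeDualWeight
  have hm4 : Measurable fun p : (ℝ × ℝ) × ℝ =>
      cubeDualWeight p.1.2 p.2 * B p.1.1 p.1.2 p.2 :=
    (hVm (by fun_prop) (by fun_prop)).mul
      (hBm.comp (g := fun p : ℝ × ℝ × ℝ => B p.1 p.2.1 p.2.2)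
        (f := fun p : (ℝ × ℝ) × ℝ => (p.1.1, p.1.2, p.2)) (by fun_prop))
  have hGm : Measurable fun t => (∫⁻ t', g (cubicGraph t - cubicGraph t')) ^ 2 :=
    (Measurable.lintegral_prod_right (by fun_prop)).pow_const 2
  have hpoint : ∀ τ σ : ℝ, σ ≠ 0 → (∫⁻ s, A τ σ s) ^ 2 ≤
      K₁ * 25 * l ^ (1 / 2 : ℝ) * ∫⁻ s, cubeDualWeight σ s * B τ σ s := by
    intro τ σ hσ
    have hBσ : Measurable (B τ σ) := hBm.comp (f := fun s => (τ, σ, s)) (by fun_prop)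
    calc (∫⁻ s, A τ σ s) ^ 2
        ≤ (∫⁻ s, cubeWeight σ s) * ∫⁻ s, cubeDualWeight σ s * A τ σ s ^ 2 := by
          refine sq_lintegral_le_of_one_le_mul (hAm τ σ)
            (measurable_cubeWeight measurable_const measurable_id)
            (measurable_cubeDualWeight measurable_const measurable_id) ?_
          filter_upwards [Measure.ae_ne volume (0 : ℝ), Measure.ae_ne volume σ] with s hs hsσ
          exact one_le_cubeWeight_mul_cubeDualWeight hσ hs hsσ
      _ ≤ K₁ * ∫⁻ s, 25 * l ^ (1 / 2 : ℝ) * (cubeDualWeight σ s * B τ σ s) := by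
          refine mul_le_mul' (hω σ hσ) (lintegral_mono fun s => ?_)
          calc cubeDualWeight σ s * A τ σ s ^ 2
              ≤ cubeDualWeight σ s * (25 * l ^ (1 / 2 : ℝ) * B τ σ s) :=
                mul_le_mul' le_rfl (hAB τ σ s)
            _ = _ := by ring
      _ = _ := by
          have hm : Measurable fun s => cubeDualWeight σ s * B τ σ s :=
            (hVm measurable_const measurable_id).mul hBσ
          rw [lintegral_const_mul _ hm]
          ring
  calc ∫⁻ t, (∫⁻ t', g (cubicGraph t - cubicGraph t')) ^ 2
      = ∫⁻ τ, ∫⁻ σ, (∫⁻ s, A τ σ s) ^ 2 := by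
        rw [lintegral_shear hGm]
        simp only [hAeq]
    _ ≤ ∫⁻ τ, ∫⁻ σ, K₁ * 25 * l ^ (1 / 2 : ℝ) * ∫⁻ s, cubeDualWeight σ s * B τ σ s := by
        refine lintegral_mono fun τ => lintegral_mono_ae ?_
        filter_upwards [Measure.ae_ne volume (0 : ℝ)] with σ hσ using hpoint τ σ hσ
    _ = K₁ * 25 * l ^ (1 / 2 : ℝ) * ∫⁻ σ, ∫⁻ s, ∫⁻ τ, cubeDualWeight σ s * B τ σ s := by
        have m2 : Measurable fun p : ℝ × ℝ => ∫⁻ s, cubeDualWeight p.2 s * B p.1 p.2 s :=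
          Measurable.lintegral_prod_right hm4
        have e1 : ∀ τ, ∫⁻ σ, K₁ * 25 * l ^ (1 / 2 : ℝ) * ∫⁻ s, cubeDualWeight σ s * B τ σ s =
            K₁ * 25 * l ^ (1 / 2 : ℝ) * ∫⁻ σ, ∫⁻ s, cubeDualWeight σ s * B τ σ s := fun τ =>
          lintegral_const_mul _ (m2.comp (f := fun σ => (τ, σ)) (by fun_prop))
        simp only [e1]
        rw [lintegral_const_mul _ (Measurable.lintegral_prod_right m2),
          lintegral_lintegral_swap m2.aemeasurable]
        congr 1
        refine lintegral_congr fun σ => lintegral_lintegral_swap (Measurable.aemeasurable ?_)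
        exact hm4.comp (f := fun p : ℝ × ℝ => ((p.1, σ), p.2)) (by fun_prop)
    _ ≤ K₁ * 25 * l ^ (1 / 2 : ℝ) * ∫⁻ σ, ∫⁻ s, cubeDualWeight σ s * H (σ ^ 3 - s ^ 3) := by
        refine mul_le_mul' le_rfl (lintegral_mono fun σ => lintegral_mono fun s => ?_)
        have hBτ : Measurable fun τ => B τ σ s := hBm.comp (f := fun τ => (τ, σ, s)) (by fun_prop)
        rw [lintegral_const_mul _ hBτ]
        exact mul_le_mul' le_rfl (hBH σ s)
    _ ≤ K₁ * 25 * l ^ (1 / 2 : ℝ) * (K₂ * ∫⁻ z, H z) := by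
        gcongr
        exact hV H hHm
    _ = _ := by
        rw [hHh]
        ring

theorem avgOp_eq_lintegral_sub_cubicGraph (f : ℝ × ℝ × ℝ → ℝ≥0∞) (x : ℝ × ℝ × ℝ) :
    avgOp (fun t => (t.2 - t.1 ^ 2) ^ 3) Set.univ f x = ∫⁻ t, f (x - cubicGraph t) := by
  rw [avgOp, Measure.restrict_univ]
  rfl

theorem exists_lintegral_pow_three_lintegral_sub_cubicGraph_le :
    ∃ K : ℝ≥0∞, K < ∞ ∧ ∀ f : ℝ × ℝ × ℝ → ℝ≥0∞, Measurable f →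
      ∫⁻ x, (∫⁻ t, f (x - cubicGraph t)) ^ 3 ≤ K * (∫⁻ x, f x ^ (3 / 2 : ℝ)) ^ 2 := by
  obtain ⟨K, hK, h⟩ := exists_lintegral_sq_lintegral_cubicGraph_sub_le
  refine ⟨3 * K, ENNReal.mul_lt_top (by simp) hK, fun f hf => ?_⟩
  have hγ := measurable_cubicGraph
  have : (volume : Measure (ℝ × ℝ)).IsAddLeftInvariant := by
    rw [Measure.volume_eq_prod]; infer_instance
  have : (volume : Measure (ℝ × ℝ × ℝ)).IsAddLeftInvariant := by
    rw [Measure.volume_eq_prod]; infer_instance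
  set N := ∫⁻ x, f x ^ (3 / 2 : ℝ) with hN
  set T : ℝ≥0∞ → ℝ × ℝ × ℝ → ℝ≥0∞ := fun l => {z | f z ≤ l}.indicator f with hT
  have hTm : ∀ {β : Type} [MeasurableSpace β] {l : β → ℝ≥0∞} {z : β → ℝ × ℝ × ℝ}, Measurable l →
      Measurable z → Measurable fun p => T (l p) (z p) := fun hl hz =>
    Measurable.ite (measurableSet_le (hf.comp hz) hl) (hf.comp hz) measurable_const
  have hpoint : ∀ y, ∫⁻ t, (∫⁻ t', T (f y) (y + (cubicGraph t - cubicGraph t'))) ^ 2 ≤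
      K * f y ^ (1 / 2 : ℝ) * N := by
    intro y
    have hTy : Measurable fun z => T (f y) (y + z) := hTm measurable_const (by fun_prop)
    refine (h (fun z => T (f y) (y + z)) (f y) hTy fun z => ?_).trans ?_
    · exact Set.indicator_apply_le' (fun hz => hz) fun _ => zero_le
    · gcongr
      rw [lintegral_add_left_eq_self (fun z => T (f y) z ^ (3 / 2 : ℝ))]
      refine lintegral_mono fun z => ?_
      gcongr
      exact Set.indicator_le_self _ _ _
  set Φ : ℝ × ℝ × ℝ → ℝ × ℝ → ℝ≥0∞ := fun x t =>
    f (x - cubicGraph t) * (∫⁻ t', T (f (x - cubicGraph t)) (x - cubicGraph t')) ^ 2 with hΦ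
  have hΦm : Measurable fun p : (ℝ × ℝ × ℝ) × ℝ × ℝ => Φ p.1 p.2 := by
    refine Measurable.mul (by fun_prop) (Measurable.pow_const ?_ 2)
    exact Measurable.lintegral_prod_right (hTm (by fun_prop) (by fun_prop))
  calc ∫⁻ x, (∫⁻ t, f (x - cubicGraph t)) ^ 3
      ≤ ∫⁻ x, 3 * ∫⁻ t, Φ x t := lintegral_mono fun x => by
        refine (lintegral_pow_three_le (by fun_prop)).trans_eq ?_
        rfl
    _ = 3 * ∫⁻ t, ∫⁻ x, Φ x t := by
        rw [lintegral_const_mul _ (Measurable.lintegral_prod_right hΦm),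
          lintegral_lintegral_swap hΦm.aemeasurable]
    _ = 3 * ∫⁻ t, ∫⁻ y, Φ (y + cubicGraph t) t := by
        congr 1
        refine lintegral_congr fun t => ?_
        rw [lintegral_add_right_eq_self (fun x => Φ x t)]
    _ = 3 * ∫⁻ y, ∫⁻ t, Φ (y + cubicGraph t) t := by
        rw [lintegral_lintegral_swap (Measurable.aemeasurable ?_)]
        exact hΦm.comp (f := fun p : (ℝ × ℝ) × ℝ × ℝ × ℝ => (p.2 + cubicGraph p.1, p.1))
          (by fun_prop)
    _ ≤ 3 * ∫⁻ y, K * N * f y ^ (3 / 2 : ℝ) := by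
        gcongr with y
        simp only [hΦ, add_sub_cancel_right, add_sub_assoc]
        rw [lintegral_const_mul]
        · calc _ ≤ f y * (K * f y ^ (1 / 2 : ℝ) * N) := by gcongr; exact hpoint y
            _ = _ := by
              rw [show (3 / 2 : ℝ) = 1 + 1 / 2 by norm_num,
                ENNReal.rpow_add_of_nonneg _ _ (by norm_num) (by norm_num), ENNReal.rpow_one]
              ring
        · exact (Measurable.lintegral_prod_right
            (hTm measurable_const (by fun_prop))).pow_const 2
    _ = 3 * K * N ^ 2 := by
        rw [lintegral_const_mul _ (by fun_prop)]
        ring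

/-- The averaging operator associated to φ(t) = (t₂ − t₁²)³ over all of ℝ² maps
L^{3/2}(ℝ³) boundedly into L³(ℝ³) (on nonnegative measurable functions). -/
theorem stmt_18 :
    ∃ C : ℝ, 0 ≤ C ∧ ∀ f : ℝ × ℝ × ℝ → ℝ≥0∞, Measurable f →
      (∫⁻ x, (avgOp (fun t => (t.2 - t.1 ^ 2) ^ 3) Set.univ f x) ^ (3 : ℝ)) ^ ((3 : ℝ)⁻¹)
        ≤ ENNReal.ofReal C * (∫⁻ x, f x ^ ((3 : ℝ) / 2)) ^ (((3 : ℝ) / 2)⁻¹) := by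
  obtain ⟨K, hK, h⟩ := exists_lintegral_pow_three_lintegral_sub_cubicGraph_le
  refine ⟨(K ^ (3 : ℝ)⁻¹).toReal, ENNReal.toReal_nonneg, fun f hf => ?_⟩
  rw [ENNReal.ofReal_toReal (ENNReal.rpow_ne_top_of_nonneg (by norm_num) hK.ne)]
  have h3 : ∀ x : ℝ≥0∞, x ^ (3 : ℝ) = x ^ 3 := fun x => by exact_mod_cast ENNReal.rpow_natCast x 3
  simp only [avgOp_eq_lintegral_sub_cubicGraph, h3]
  calc _ ≤ (K * (∫⁻ x, f x ^ (3 / 2 : ℝ)) ^ 2) ^ (3 : ℝ)⁻¹ := by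
        gcongr
        exact h f hf
    _ = _ := by
      rw [ENNReal.mul_rpow_of_nonneg _ _ (by norm_num), ← ENNReal.rpow_natCast,
        ← ENNReal.rpow_mul]
      norm_num
end

section
/- Let S ≥ 3 be an integer, let ε ∈ {−1, +1}, and let φ(t₁,t₂) = t₁² + ε t₂^S. Define T f(x) := ∫_{ℝ²} f(x₁ − t₁, x₂ − t₂, x₃ − φ(t₁,t₂)) dt₁ dt₂ for x ∈ ℝ³. Then there is a constant C < ∞ (depending only on S) such that ⟨T χ_E, χ_F⟩ ≤ C |E|^{(2S+2)/(3S+2)} |F|^{(2S+2)/(3S+2)} for all Lebesgue measurable E, F ⊆ ℝ³ of finite measure; that is, T is of restricted weak type (p,q) with 1/p = (2S+2)/(3S+2) and 1/q = S/(3S+2). -/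
open MeasureTheory MvPolynomial
open scoped ENNReal

theorem lintegral_abs_deriv_mul_comp_le_of_injOn {s : Set ℝ} (hs : MeasurableSet s) {f f' : ℝ → ℝ}
    (hf : ∀ x, HasDerivAt f (f' x) x) (hinj : Set.InjOn f s) (g : ℝ → ℝ≥0∞) :
    ∫⁻ x in s, ENNReal.ofReal |f' x| * g (f x) ≤ ∫⁻ y, g y := by
  rw [← lintegral_image_eq_lintegral_abs_deriv_mul hs (fun x _ => (hf x).hasDerivWithinAt) hinj]
  exact setLIntegral_le_lintegral _ _

theorem setLIntegral_abs_deriv_mul_comp_le {f f' : ℝ → ℝ} (hf : ∀ x, HasDerivAt f (f' x) x)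
    (g : ℝ → ℝ≥0∞) (Z : Finset ℝ) (s : Set ℝ) (hs : s.OrdConnected)
    (hZ : ∀ x ∈ s, f' x = 0 → x ∈ Z) :
    ∫⁻ x in s, ENNReal.ofReal |f' x| * g (f x) ≤ 2 ^ Z.card * ∫⁻ y, g y := by
  induction Z using Finset.induction_on generalizing s with
  | empty =>
    have hinj : Set.InjOn f s := by
      intro a ha b hb hab
      by_contra hne
      wlog hlt : a < b generalizing a b
      · exact this hb ha hab.symm (Ne.symm hne) (lt_of_le_of_ne (not_lt.1 hlt) (Ne.symm hne))
      obtain ⟨c, hc, hc0⟩ := exists_hasDerivAt_eq_zero hlt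
        (fun x _ => (hf x).continuousAt.continuousWithinAt) hab (fun x _ => hf x)
      simpa using hZ c (hs.out ha hb (Set.Ioo_subset_Icc_self hc)) hc0
    simpa using lintegral_abs_deriv_mul_comp_le_of_injOn hs.measurableSet hf hinj g
  | insert z Z hz ih =>
    have hl := ih (s ∩ Set.Iio z) (hs.inter Set.ordConnected_Iio) (fun x hx h0 =>
      (Finset.mem_insert.1 (hZ x hx.1 h0)).resolve_left (ne_of_lt hx.2))
    have hr := ih (s ∩ Set.Ioi z) (hs.inter Set.ordConnected_Ioi) (fun x hx h0 =>
      (Finset.mem_insert.1 (hZ x hx.1 h0)).resolve_left (ne_of_gt hx.2))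
    have hsub : s ⊆ ((s ∩ Set.Iio z) ∪ (s ∩ Set.Ioi z)) ∪ {z} := by
      intro x hx
      rcases lt_trichotomy x z with h | h | h
      · exact Or.inl (Or.inl ⟨hx, h⟩)
      · exact Or.inr h
      · exact Or.inl (Or.inr ⟨hx, h⟩)
    calc ∫⁻ x in s, ENNReal.ofReal |f' x| * g (f x)
        ≤ ∫⁻ x in ((s ∩ Set.Iio z) ∪ (s ∩ Set.Ioi z)) ∪ {z}, ENNReal.ofReal |f' x| * g (f x) :=
          lintegral_mono_set hsub
      _ ≤ ((∫⁻ x in s ∩ Set.Iio z, ENNReal.ofReal |f' x| * g (f x))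
          + ∫⁻ x in s ∩ Set.Ioi z, ENNReal.ofReal |f' x| * g (f x)) + 0 := by
          refine (lintegral_union_le _ _ _).trans (add_le_add (lintegral_union_le _ _ _) ?_)
          simp
      _ ≤ 2 ^ Z.card * (∫⁻ y, g y) + 2 ^ Z.card * (∫⁻ y, g y) + 0 := by gcongr
      _ = 2 ^ (insert z Z).card * ∫⁻ y, g y := by
          rw [Finset.card_insert_of_notMem hz, pow_succ]; ring

theorem lintegral_abs_derivative_mul_comp_le (p : Polynomial ℝ) {d : ℕ} (hd : p.natDegree ≤ d)
    (g : ℝ → ℝ≥0∞) :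
    ∫⁻ x, ENNReal.ofReal |p.derivative.eval x| * g (p.eval x) ≤ 2 ^ d * ∫⁻ y, g y := by
  by_cases h0 : p.derivative = 0
  · simp [h0]
  have hcard : p.derivative.roots.toFinset.card ≤ d :=
    (Multiset.toFinset_card_le _).trans ((Polynomial.card_roots' _).trans
      ((Polynomial.natDegree_derivative_le p).trans ((Nat.sub_le _ _).trans hd)))
  have h := setLIntegral_abs_deriv_mul_comp_le (fun x => p.hasDerivAt x) g
    p.derivative.roots.toFinset Set.univ Set.ordConnected_univ
    (fun x _ hx => by simpa [h0] using hx)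
  rw [setLIntegral_univ] at h
  refine h.trans ?_
  gcongr
  norm_num

theorem lintegral_affine_comp_le {α : ℝ} (hα : α ≠ 0) (β : ℝ) (g : ℝ → ℝ≥0∞) :
    ENNReal.ofReal |α| * ∫⁻ x, g (α * x + β) ≤ ∫⁻ y, g y := by
  have h := lintegral_abs_deriv_mul_comp_le_of_injOn (s := Set.univ) MeasurableSet.univ
    (f := fun x => α * x + β) (f' := fun _ => α)
    (fun x => by simpa using ((hasDerivAt_id x).const_mul α).add_const β)
    (fun a _ b _ hab => by simpa [hα] using hab) g
  rwa [setLIntegral_univ, lintegral_const_mul' _ _ ENNReal.ofReal_ne_top] at h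

theorem lintegral_lintegral_lintegral_rotate {X Y Z : Type*} [MeasurableSpace X]
    [MeasurableSpace Y] [MeasurableSpace Z] {μ : Measure X} {ν : Measure Y} {ρ : Measure Z}
    [SFinite μ] [SFinite ν] [SFinite ρ]
    {f : X → Y → Z → ℝ≥0∞} (hf : Measurable fun q : X × Y × Z => f q.1 q.2.1 q.2.2) :
    ∫⁻ z, ∫⁻ x, ∫⁻ y, f x y z ∂ν ∂μ ∂ρ = ∫⁻ x, ∫⁻ y, ∫⁻ z, f x y z ∂ρ ∂ν ∂μ := by
  have h1 : Measurable fun q : Z × X => ∫⁻ y, f q.2 y q.1 ∂ν :=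
    Measurable.lintegral_prod_right'
      (f := fun q : (Z × X) × Y => f q.1.2 q.2 q.1.1) (hf.comp (by fun_prop :
        Measurable fun q : (Z × X) × Y => (q.1.2, q.2, q.1.1)))
  rw [lintegral_lintegral_swap h1.aemeasurable]
  refine lintegral_congr fun x => ?_
  have h2 : Measurable fun q : Z × Y => f x q.2 q.1 :=
    hf.comp (by fun_prop : Measurable fun q : Z × Y => (x, q.2, q.1))
  exact lintegral_lintegral_swap h2.aemeasurable

theorem measure_univ_sq_le_lintegral_of_sublevel {X : Type*} [MeasurableSpace X] {μ : Measure X}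
    [IsFiniteMeasure μ] {K : X → ℝ≥0∞} (hK : Measurable K) {c : ℝ≥0∞} (hc0 : c ≠ 0) (hc : c ≠ ⊤)
    (h : ∀ δ : NNReal, μ {x | K x ≤ δ} ≤ c * δ) :
    μ Set.univ ^ 2 ≤ 4 * c * ∫⁻ x, K x ∂μ := by
  have h2c0 : 2 * c ≠ 0 := mul_ne_zero two_ne_zero hc0
  have h2c : 2 * c ≠ ⊤ := ENNReal.mul_ne_top ENNReal.ofNat_ne_top hc
  obtain ⟨δ, hδ⟩ : ∃ δ : NNReal, (δ : ℝ≥0∞) = μ Set.univ / (2 * c) :=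
    ⟨(μ Set.univ / (2 * c)).toNNReal,
      ENNReal.coe_toNNReal (ENNReal.div_ne_top (measure_ne_top _ _) h2c0)⟩
  have hm : μ Set.univ = 2 * c * δ := by rw [hδ, ENNReal.mul_div_cancel h2c0 h2c]
  have hcover : 2 * c * δ ≤ c * δ + μ {x | (δ : ℝ≥0∞) ≤ K x} := by
    rw [← hm]
    calc μ Set.univ ≤ μ ({x | K x ≤ δ} ∪ {x | (δ : ℝ≥0∞) ≤ K x}) :=
          measure_mono fun x _ => le_total (K x) δ
      _ ≤ _ := (measure_union_le _ _).trans (add_le_add (h δ) le_rfl)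
  have hlow : c * δ ≤ μ {x | (δ : ℝ≥0∞) ≤ K x} := by
    have : c * δ + c * δ ≤ c * δ + μ {x | (δ : ℝ≥0∞) ≤ K x} := by
      convert hcover using 1; ring
    exact (ENNReal.add_le_add_iff_left (ENNReal.mul_ne_top hc ENNReal.coe_ne_top)).1 this
  calc μ Set.univ ^ 2 = 4 * c * (δ * (c * δ)) := by rw [hm]; ring
    _ ≤ 4 * c * (δ * μ {x | (δ : ℝ≥0∞) ≤ K x}) := by gcongr
    _ ≤ _ := by gcongr; exact mul_meas_ge_le_lintegral hK _

theorem measure_univ_pow_four_le_lintegral_of_sublevel {X : Type*} [MeasurableSpace X]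
    {μ : Measure X} [IsFiniteMeasure μ] {K : X × X × X → ℝ≥0∞} (hK : Measurable K)
    (hrot : ∀ x y z, K (y, z, x) = K (x, y, z))
    {G : Set (X × X × X)} (hG : MeasurableSet G)
    (hcov : ∀ x y z, (x, y, z) ∈ G ∨ (y, z, x) ∈ G ∨ (z, x, y) ∈ G)
    {c : ℝ≥0∞} (hc0 : c ≠ 0) (hc : c ≠ ⊤)
    (h : ∀ (δ : NNReal) (x y : X), μ {z | (x, y, z) ∈ G ∧ K (x, y, z) ≤ δ} ≤ c * δ) :
    μ Set.univ ^ 4 ≤ 12 * c * ∫⁻ x, ∫⁻ y, ∫⁻ z, K (x, y, z) ∂μ ∂μ ∂μ := by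
  by_cases hm0 : μ Set.univ = 0
  · simp [hm0]
  have hmt : μ Set.univ ≠ ⊤ := measure_ne_top _ _
  set ν := μ.prod (μ.prod μ) with hν
  let r : X × X × X → X × X × X := fun q => (q.2.1, q.2.2, q.1)
  have hr : MeasurePreserving r ν ν :=
    (measurePreserving_prodAssoc μ μ μ).comp Measure.measurePreserving_swap
  have hsub : ∀ δ : NNReal, ν {q | K q ≤ δ} ≤ 3 * c * μ Set.univ ^ 2 * δ := by
    intro δ
    set T : Set (X × X × X) := {q | q ∈ G ∧ K q ≤ δ} with hT
    have hTm : MeasurableSet T := hG.inter (measurableSet_le hK measurable_const)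
    have hTν : ν T ≤ c * μ Set.univ ^ 2 * δ := by
      have h1 : ∀ x, (μ.prod μ) (Prod.mk x ⁻¹' T) ≤ c * δ * μ Set.univ := by
        intro x
        rw [Measure.prod_apply (measurable_prodMk_left hTm)]
        calc _ ≤ ∫⁻ _, c * δ ∂μ := lintegral_mono fun y => h δ x y
          _ = _ := by simp
      rw [hν, Measure.prod_apply hTm]
      calc _ ≤ ∫⁻ _, c * δ * μ Set.univ ∂μ := lintegral_mono h1
        _ = _ := by rw [lintegral_const]; ring
    have hcover : {q | K q ≤ δ} ⊆ T ∪ (r ⁻¹' T ∪ (r ∘ r) ⁻¹' T) := by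
      rintro ⟨x, y, z⟩ hq
      have e1 : K (y, z, x) ≤ δ := (hrot x y z).trans_le hq
      have e2 : K (z, x, y) ≤ δ := (hrot y z x).trans_le e1
      rcases hcov x y z with g | g | g
      · exact Or.inl ⟨g, hq⟩
      · exact Or.inr (Or.inl ⟨g, e1⟩)
      · exact Or.inr (Or.inr ⟨g, e2⟩)
    calc ν {q | K q ≤ δ} ≤ ν T + (ν (r ⁻¹' T) + ν ((r ∘ r) ⁻¹' T)) :=
          (measure_mono hcover).trans ((measure_union_le _ _).trans
            (add_le_add le_rfl (measure_union_le _ _)))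
      _ = 3 * ν T := by
          rw [hr.measure_preimage hTm.nullMeasurableSet,
            (hr.comp hr).measure_preimage hTm.nullMeasurableSet]; ring
      _ ≤ 3 * (c * μ Set.univ ^ 2 * δ) := by gcongr
      _ = _ := by ring
  have key := measure_univ_sq_le_lintegral_of_sublevel (μ := ν) hK
    (c := 3 * c * μ Set.univ ^ 2) (by simp [hc0, hm0])
    (ENNReal.mul_ne_top (ENNReal.mul_ne_top ENNReal.ofNat_ne_top hc) (ENNReal.pow_ne_top hmt)) hsub
  have hνu : ν Set.univ = μ Set.univ ^ 3 := by
    rw [hν, ← Set.univ_prod_univ, Measure.prod_prod, ← Set.univ_prod_univ, Measure.prod_prod]; ring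
  have hint : ∫⁻ q, K q ∂ν = ∫⁻ x, ∫⁻ y, ∫⁻ z, K (x, y, z) ∂μ ∂μ ∂μ := by
    rw [hν, lintegral_prod _ hK.aemeasurable]
    exact lintegral_congr fun x => lintegral_prod _ (hK.comp measurable_prodMk_left).aemeasurable
  rw [hνu, hint] at key
  refine (ENNReal.mul_le_mul_iff_right (pow_ne_zero 2 hm0) (ENNReal.pow_ne_top hmt)).1 ?_
  calc μ Set.univ ^ 2 * μ Set.univ ^ 4 = (μ Set.univ ^ 3) ^ 2 := by ring
    _ ≤ _ := key
    _ = _ := by ring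

theorem pow_measure_le_of_forall_finite {X : Type*} [MeasurableSpace X] {μ : Measure X}
    [SigmaFinite μ] {A : Set X} (hA : MeasurableSet A) {k : ℕ} (hk : k ≠ 0) {M : ℝ≥0∞}
    (h : ∀ A' ⊆ A, MeasurableSet A' → μ A' ≠ ⊤ → μ A' ^ k ≤ M) : μ A ^ k ≤ M := by
  by_cases hfin : μ A = ⊤
  · have : M = ⊤ := by
      refine ENNReal.eq_top_of_forall_nnreal_le fun r => ?_
      obtain ⟨A', hA', hm', h1, h2⟩ := Measure.exists_subset_measure_lt_top hA
        (show ((max r 1 : NNReal) : ℝ≥0∞) < μ A by rw [hfin]; exact ENNReal.coe_lt_top)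
      refine le_trans ?_ (h A' hm' hA' h2.ne)
      calc (r : ℝ≥0∞) ≤ ((max r 1 : NNReal) : ℝ≥0∞) := by exact_mod_cast le_max_left _ _
        _ ≤ ((max r 1 : NNReal) : ℝ≥0∞) ^ k :=
          le_self_pow₀ (by exact_mod_cast le_max_right _ _) hk
        _ ≤ μ A' ^ k := by gcongr
    rw [this]; exact le_top
  · exact h A subset_rfl hA hfin

theorem volume_sublevel_le_of_expanding {ψ : ℝ → ℝ} {B : Set ℝ} {κ : ℝ} (hκ : 0 < κ)
    (hψ : ∀ b ∈ B, ∀ b' ∈ B, κ * |b - b'| ≤ |ψ b - ψ b'|) (w e d : ℝ) (hw : w ≠ 0) :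
    volume {b | b ∈ B ∧ |w * ψ b - e| ≤ d} ≤ ENNReal.ofReal (2 * d / (κ * |w|)) := by
  refine (Real.volume_le_diam _).trans (Metric.ediam_le fun b hb b' hb' => ?_)
  rw [edist_dist, Real.dist_eq]
  refine ENNReal.ofReal_le_ofReal ?_
  rw [le_div_iff₀ (mul_pos hκ (abs_pos.2 hw))]
  have h1 := hψ b hb.1 b' hb'.1
  have h2 : |w| * |ψ b - ψ b'| ≤ 2 * d := by
    rw [← abs_mul]
    have h3 := hb.2
    have h4 := hb'.2
    rw [abs_le] at h3 h4 ⊢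
    constructor <;> nlinarith
  nlinarith [mul_le_mul_of_nonneg_left h1 (abs_nonneg w)]

/-- Twice the signed area of the triangle with vertices `(tᵢ.1, ψ tᵢ.2)`. -/
def triangleDet (ψ : ℝ → ℝ) (t₁ t₂ t₃ : ℝ × ℝ) : ℝ :=
  (t₁.1 - t₂.1) * (ψ t₁.2 - ψ t₃.2) - (t₁.1 - t₃.1) * (ψ t₁.2 - ψ t₂.2)

theorem volume_triangleDet_sublevel_le {ψ : ℝ → ℝ} (hψm : Measurable ψ) {B : Set ℝ} {κ : ℝ}
    (hκ : 0 < κ) (hψ : ∀ b ∈ B, ∀ b' ∈ B, κ * |b - b'| ≤ |ψ b - ψ b'|) {A : Set (ℝ × ℝ)}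
    (hA : MeasurableSet A) (hAB : ∀ t ∈ A, t.2 ∈ B) (t₁ t₂ : ℝ × ℝ) {d : ℝ} (hd : 0 ≤ d) :
    volume {t | t ∈ A ∧ |t.1 - t₂.1| ≤ |t₁.1 - t₂.1| ∧ |triangleDet ψ t₁ t₂ t| ≤ d}
      ≤ ENNReal.ofReal (4 * d / κ) := by
  set w := t₁.1 - t₂.1 with hw
  set Q := {t | t ∈ A ∧ |t.1 - t₂.1| ≤ |w| ∧ |triangleDet ψ t₁ t₂ t| ≤ d} with hQ
  have hQm : MeasurableSet Q := by
    have h1 : MeasurableSet {t : ℝ × ℝ | |t.1 - t₂.1| ≤ |w|} :=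
      measurableSet_le (by fun_prop) measurable_const
    have h2 : MeasurableSet {t : ℝ × ℝ | |triangleDet ψ t₁ t₂ t| ≤ d} := by
      unfold triangleDet
      exact measurableSet_le (by fun_prop) measurable_const
    exact hA.inter (h1.inter h2)
  rw [Measure.volume_eq_prod, Measure.prod_apply hQm]
  set I := Set.Icc (t₂.1 - |w|) (t₂.1 + |w|) with hI
  have hI' : volume I = ENNReal.ofReal (2 * |w|) := by
    rw [hI, Real.volume_Icc]; congr 1; ring
  have hout : ∀ a ∉ I, volume (Prod.mk a ⁻¹' Q) = 0 := by
    intro a ha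
    have : Prod.mk a ⁻¹' Q = ∅ := by
      refine Set.eq_empty_of_forall_notMem fun b hb => ha ?_
      have h1 := hb.2.1
      rw [abs_le] at h1
      exact ⟨by linarith, by linarith⟩
    simp [this]
  have hrestr : ∫⁻ a, volume (Prod.mk a ⁻¹' Q) = ∫⁻ a in I, volume (Prod.mk a ⁻¹' Q) := by
    rw [← lintegral_indicator measurableSet_Icc]
    refine lintegral_congr fun a => ?_
    by_cases ha : a ∈ I
    · rw [Set.indicator_of_mem ha]
    · rw [Set.indicator_of_notMem ha, hout a ha]
  rw [hrestr]
  by_cases hw0 : w = 0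
  · have : volume I = 0 := by simp [hI', hw0]
    rw [Measure.restrict_eq_zero.2 this]
    simp
  · have hslice : ∀ a, volume (Prod.mk a ⁻¹' Q) ≤ ENNReal.ofReal (2 * d / (κ * |w|)) := by
      intro a
      refine le_trans (measure_mono ?_) (volume_sublevel_le_of_expanding hκ hψ w
        (w * ψ t₁.2 - (t₁.1 - a) * (ψ t₁.2 - ψ t₂.2)) d hw0)
      intro b hb
      refine ⟨hAB _ hb.1, ?_⟩
      have h1 := hb.2.2
      rw [triangleDet, ← hw, ← abs_neg] at h1
      convert h1 using 2
      ring
    calc ∫⁻ a in I, volume (Prod.mk a ⁻¹' Q)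
        ≤ ∫⁻ _ in I, ENNReal.ofReal (2 * d / (κ * |w|)) := lintegral_mono hslice
      _ = ENNReal.ofReal (4 * d / κ) := by
        rw [setLIntegral_const, hI', ← ENNReal.ofReal_mul (by positivity)]
        congr 1
        have := abs_pos.2 hw0
        field_simp
        ring

theorem volume_pow_four_le_lintegral_triangleDet {ψ : ℝ → ℝ} (hψm : Measurable ψ) {B : Set ℝ}
    {κ : ℝ} (hκ : 0 < κ) (hψ : ∀ b ∈ B, ∀ b' ∈ B, κ * |b - b'| ≤ |ψ b - ψ b'|)
    {A : Set (ℝ × ℝ)} (hA : MeasurableSet A) (hAB : ∀ t ∈ A, t.2 ∈ B) :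
    volume A ^ 4 ≤ ENNReal.ofReal (48 / κ) * ∫⁻ t₁ in A, ∫⁻ t₂ in A, ∫⁻ t₃ in A,
      ENNReal.ofReal |triangleDet ψ t₁ t₂ t₃| := by
  refine pow_measure_le_of_forall_finite hA four_ne_zero fun A' hA' hA'm hfin => ?_
  have : IsFiniteMeasure (volume.restrict A') := isFiniteMeasure_restrict.2 hfin
  have hdet : Measurable fun q : (ℝ × ℝ) × (ℝ × ℝ) × (ℝ × ℝ) =>
      ENNReal.ofReal |triangleDet ψ q.1 q.2.1 q.2.2| := by
    unfold triangleDet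
    fun_prop
  have key := measure_univ_pow_four_le_lintegral_of_sublevel (μ := volume.restrict A') hdet
    (fun x y z => by
      congr 2
      simp only [triangleDet]
      ring)
    (G := {q | |q.2.2.1 - q.2.1.1| ≤ |q.1.1 - q.2.1.1|})
    (measurableSet_le (by fun_prop) (by fun_prop))
    (fun x y z => by
      simp only [Set.mem_ofPred_eq]
      rw [abs_sub_comm y.1 x.1, abs_sub_comm x.1 z.1, abs_sub_comm y.1 z.1]
      rcases le_total |z.1 - y.1| |x.1 - y.1| with h1 | h1
      · exact Or.inl h1
      rcases le_total |x.1 - y.1| |z.1 - x.1| with h2 | h2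
      · exact Or.inr (Or.inr h2)
      · exact Or.inr (Or.inl (h2.trans h1)))
    (c := ENNReal.ofReal (4 / κ))
    (by simpa using by positivity) ENNReal.ofReal_ne_top
    (fun δ x y => by
      rw [Measure.restrict_apply' hA'm]
      calc _ ≤ volume {t | t ∈ A' ∧ |t.1 - y.1| ≤ |x.1 - y.1| ∧ |triangleDet ψ x y t| ≤ δ} := by
            refine measure_mono ?_
            rintro t ⟨⟨h1, h2⟩, h3⟩
            refine ⟨h3, h1, ?_⟩
            simpa [ENNReal.ofReal_le_iff_le_toReal] using h2
        _ ≤ _ := volume_triangleDet_sublevel_le hψm hκ hψ hA'm (fun t ht => hAB t (hA' ht)) x y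
            δ.coe_nonneg
        _ = _ := by
            rw [← ENNReal.ofReal_coe_nnreal, ← ENNReal.ofReal_mul (by positivity)]
            congr 1
            ring)
  rw [Measure.restrict_apply_univ] at key
  refine key.trans ?_
  have hc : (12 : ℝ≥0∞) * ENNReal.ofReal (4 / κ) = ENNReal.ofReal (48 / κ) := by
    rw [← ENNReal.ofReal_ofNat 12, ← ENNReal.ofReal_mul (by norm_num)]
    congr 1
    ring
  rw [hc]
  gcongr

theorem volume_pow_three_le_lintegral_abs_sub {L : ℝ} (hL : 0 < L) {A : Set (ℝ × ℝ)}
    (hA : MeasurableSet A) (hAB : ∀ t ∈ A, t.2 ∈ Set.Icc (-L) L) :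
    volume A ^ 3 ≤ ENNReal.ofReal (16 * L) *
      ∫⁻ s in A, ∫⁻ t in A, ENNReal.ofReal |s.1 - t.1| := by
  refine pow_measure_le_of_forall_finite hA three_ne_zero fun A' hA' hA'm hfin => ?_
  have : IsFiniteMeasure (volume.restrict A') := isFiniteMeasure_restrict.2 hfin
  have h1 : ∀ s : ℝ × ℝ, volume A' ^ 2 ≤
      ENNReal.ofReal (16 * L) * ∫⁻ t in A', ENNReal.ofReal |s.1 - t.1| := by
    intro s
    have key := measure_univ_sq_le_lintegral_of_sublevel (μ := volume.restrict A')
      (K := fun t : ℝ × ℝ => ENNReal.ofReal |s.1 - t.1|) (by fun_prop)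
      (c := ENNReal.ofReal (4 * L)) (by simpa using hL) ENNReal.ofReal_ne_top
      (fun δ => by
        rw [Measure.restrict_apply' hA'm]
        calc _ ≤ volume (Set.Icc (s.1 - δ) (s.1 + δ) ×ˢ Set.Icc (-L) L) := by
              refine measure_mono ?_
              rintro t ⟨h2, h3⟩
              refine ⟨?_, hAB t (hA' h3)⟩
              have h4 : |s.1 - t.1| ≤ δ := by
                simpa [ENNReal.ofReal_le_iff_le_toReal] using h2
              rw [abs_le] at h4
              exact ⟨by linarith, by linarith⟩
          _ = _ := by
              rw [Measure.volume_eq_prod, Measure.prod_prod, Real.volume_Icc, Real.volume_Icc,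
                ← ENNReal.ofReal_coe_nnreal, ← ENNReal.ofReal_mul (by linarith [δ.coe_nonneg]),
                ← ENNReal.ofReal_mul (by positivity)]
              congr 1
              ring)
    rw [Measure.restrict_apply_univ] at key
    have hc : (4 : ℝ≥0∞) * ENNReal.ofReal (4 * L) = ENNReal.ofReal (16 * L) := by
      rw [← ENNReal.ofReal_ofNat 4, ← ENNReal.ofReal_mul (by norm_num)]
      congr 1
      ring
    rwa [hc] at key
  calc volume A' ^ 3 = ∫⁻ _ in A', volume A' ^ 2 := by rw [setLIntegral_const]; ring
    _ ≤ ∫⁻ s in A', ENNReal.ofReal (16 * L) * ∫⁻ t in A', ENNReal.ofReal |s.1 - t.1| :=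
        lintegral_mono h1
    _ = ENNReal.ofReal (16 * L) * ∫⁻ s in A', ∫⁻ t in A', ENNReal.ofReal |s.1 - t.1| :=
        lintegral_const_mul' _ _ ENNReal.ofReal_ne_top
    _ ≤ _ := by
        gcongr

/-- The graph function `t₁² + ε t₂ ^ S`. -/
def quadraticMonomial (S : ℕ) (ε : ℝ) (t : ℝ × ℝ) : ℝ := t.1 ^ 2 + ε * t.2 ^ S

@[fun_prop]
theorem measurable_quadraticMonomial (S : ℕ) (ε : ℝ) : Measurable (quadraticMonomial S ε) := by
  unfold quadraticMonomial
  fun_prop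

theorem lintegral_triangleDet_mul_le {S : ℕ} (hS : 1 ≤ S) {ε : ℝ} (hε : |ε| = 1) {u v : ℝ × ℝ}
    (hu : u.1 ≠ 0) {g₁ g₂ : ℝ → ℝ≥0∞} (hg₁ : Measurable g₁) (hg₂ : Measurable g₂) :
    ∫⁻ t, ENNReal.ofReal |triangleDet (fun b => b ^ (S - 1)) t (t - u) (t - v)| *
        (g₁ (quadraticMonomial S ε t - quadraticMonomial S ε (t - u)) *
          g₂ (quadraticMonomial S ε t - quadraticMonomial S ε (t - v)))
      ≤ 2 ^ S * ((∫⁻ y, g₁ y) * ∫⁻ y, g₂ y) := by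
  set r := v.1 / u.1 with hr
  set p : Polynomial ℝ := Polynomial.C ε * (Polynomial.X ^ S - (Polynomial.X - Polynomial.C v.2) ^ S
    - Polynomial.C r * (Polynomial.X ^ S - (Polynomial.X - Polynomial.C u.2) ^ S)) with hp
  have hdeg : p.natDegree ≤ S := by
    rw [hp]
    compute_degree
  have heval : ∀ b, p.eval b = ε * (b ^ S - (b - v.2) ^ S - r * (b ^ S - (b - u.2) ^ S)) := by
    intro b; simp [hp]
  have hder : ∀ b, p.derivative.eval b = ε * S * (b ^ (S - 1) - (b - v.2) ^ (S - 1)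
      - r * (b ^ (S - 1) - (b - u.2) ^ (S - 1))) := by
    intro b
    simp [hp, Polynomial.derivative_pow]
    ring
  have hJ : ∀ a b : ℝ, |triangleDet (fun b => b ^ (S - 1)) (a, b) ((a, b) - u) ((a, b) - v)|
      ≤ |p.derivative.eval b| * |2 * u.1| := by
    intro a b
    have h1 : p.derivative.eval b * u.1 = ε * S *
        triangleDet (fun b => b ^ (S - 1)) (a, b) ((a, b) - u) ((a, b) - v) := by
      rw [hder, hr]
      simp only [triangleDet, Prod.fst_sub, Prod.snd_sub]
      field_simp
      ring
    have hS' : (1 : ℝ) ≤ |(S : ℝ)| := by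
      rw [Nat.abs_cast]; exact_mod_cast hS
    calc _ ≤ |ε * S * triangleDet (fun b => b ^ (S - 1)) (a, b) ((a, b) - u) ((a, b) - v)| := by
          rw [abs_mul, abs_mul, hε, one_mul]
          exact le_mul_of_one_le_left (abs_nonneg _) hS'
      _ = |p.derivative.eval b| * |u.1| := by rw [← h1, abs_mul]
      _ ≤ |p.derivative.eval b| * |2 * u.1| := by
          rw [abs_mul 2]
          gcongr
          norm_num
          linarith [abs_nonneg u.1]
  set k : ℝ → ℝ := fun b => -u.1 ^ 2 + ε * (b ^ S - (b - u.2) ^ S) with hk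
  set c : ℝ := v.1 * u.1 - v.1 ^ 2 with hc
  have hφu : ∀ a b : ℝ, quadraticMonomial S ε (a, b) - quadraticMonomial S ε ((a, b) - u)
      = 2 * u.1 * a + k b := by
    intro a b
    simp only [quadraticMonomial, hk, Prod.fst_sub, Prod.snd_sub]
    ring
  have hφv : ∀ a b : ℝ, quadraticMonomial S ε (a, b) - quadraticMonomial S ε ((a, b) - v)
      = p.eval b + (r * (2 * u.1 * a + k b) + c) := by
    intro a b
    rw [heval]
    simp only [quadraticMonomial, hk, hc, hr, Prod.fst_sub, Prod.snd_sub]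
    field_simp
    ring
  have hpm : Measurable fun b => p.eval b := p.continuous.measurable
  have hdm : Measurable fun b => p.derivative.eval b := p.derivative.continuous.measurable
  have hinner : ∀ b : ℝ,
      ∫⁻ a, ENNReal.ofReal |triangleDet (fun b => b ^ (S - 1)) (a, b) ((a, b) - u) ((a, b) - v)| *
        (g₁ (quadraticMonomial S ε (a, b) - quadraticMonomial S ε ((a, b) - u)) *
          g₂ (quadraticMonomial S ε (a, b) - quadraticMonomial S ε ((a, b) - v)))
      ≤ ∫⁻ y, g₁ y * (ENNReal.ofReal |p.derivative.eval b| * g₂ (p.eval b + (r * y + c))) := by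
    intro b
    calc _ ≤ ∫⁻ a, ENNReal.ofReal |p.derivative.eval b| * (ENNReal.ofReal |2 * u.1| *
            (fun y => g₁ y * g₂ (p.eval b + (r * y + c))) (2 * u.1 * a + k b)) := by
          refine lintegral_mono fun a => ?_
          simp only
          rw [hφu, hφv, ← mul_assoc (ENNReal.ofReal _) (ENNReal.ofReal _),
            ← ENNReal.ofReal_mul (abs_nonneg _)]
          gcongr
          exact hJ a b
      _ = ENNReal.ofReal |p.derivative.eval b| * (ENNReal.ofReal |2 * u.1| * ∫⁻ a,
            (fun y => g₁ y * g₂ (p.eval b + (r * y + c))) (2 * u.1 * a + k b)) := by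
          rw [lintegral_const_mul' _ _ ENNReal.ofReal_ne_top,
            lintegral_const_mul' _ _ ENNReal.ofReal_ne_top]
      _ ≤ ENNReal.ofReal |p.derivative.eval b| * ∫⁻ y, g₁ y * g₂ (p.eval b + (r * y + c)) := by
          gcongr
          exact lintegral_affine_comp_le (mul_ne_zero two_ne_zero hu) _ _
      _ = _ := by
          rw [← lintegral_const_mul' _ _ ENNReal.ofReal_ne_top]
          exact lintegral_congr fun y => by ring
  have hmeas : Measurable fun t : ℝ × ℝ =>
      ENNReal.ofReal |triangleDet (fun b => b ^ (S - 1)) t (t - u) (t - v)| *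
        (g₁ (quadraticMonomial S ε t - quadraticMonomial S ε (t - u)) *
          g₂ (quadraticMonomial S ε t - quadraticMonomial S ε (t - v))) := by
    unfold triangleDet
    fun_prop
  rw [Measure.volume_eq_prod, lintegral_prod_symm _ hmeas.aemeasurable]
  refine (lintegral_mono hinner).trans ?_
  rw [lintegral_lintegral_swap (by fun_prop)]
  calc _ ≤ ∫⁻ y, g₁ y * (2 ^ S * ∫⁻ z, g₂ z) := by
        refine lintegral_mono fun y => ?_
        rw [lintegral_const_mul _ (by fun_prop)]
        gcongr
        refine (lintegral_abs_derivative_mul_comp_le p hdeg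
          (fun z => g₂ (z + (r * y + c)))).trans ?_
        rw [lintegral_add_right_eq_self]
    _ = _ := by
        rw [lintegral_mul_const _ hg₁]
        ring

theorem lintegral_lintegral_translate {φ : ℝ × ℝ → ℝ} (hφ : Measurable φ)
    {H : ℝ × ℝ × ℝ → ℝ × ℝ → ℝ≥0∞} (hH : Measurable fun q : (ℝ × ℝ × ℝ) × (ℝ × ℝ) => H q.1 q.2) :
    ∫⁻ x, ∫⁻ t, H x t = ∫⁻ y, ∫⁻ t, H (y + (t.1, t.2, φ t)) t := by
  have hH' : Measurable fun q : (ℝ × ℝ × ℝ) × (ℝ × ℝ) =>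
      H (q.1 + (q.2.1, q.2.2, φ q.2)) q.2 :=
    hH.comp (by fun_prop : Measurable fun q : (ℝ × ℝ × ℝ) × (ℝ × ℝ) =>
      (q.1 + (q.2.1, q.2.2, φ q.2), q.2))
  have : (volume : Measure (ℝ × ℝ × ℝ)).IsAddLeftInvariant := Measure.prod.instIsAddLeftInvariant
  rw [lintegral_lintegral_swap hH.aemeasurable,
    lintegral_lintegral_swap (f := fun y t => H (y + (t.1, t.2, φ t)) t) hH'.aemeasurable]
  exact lintegral_congr fun t => (lintegral_add_right_eq_self (fun x => H x t) _).symm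

theorem lintegral_prod_triple {f : ℝ × ℝ × ℝ → ℝ≥0∞} (hf : Measurable f) (y : ℝ × ℝ × ℝ) :
    ∫⁻ u : ℝ × ℝ, ∫⁻ p : ℝ, f (y + (u.1, u.2, p)) = ∫⁻ x, f x := by
  have h1 : Measurable fun q : (ℝ × ℝ) × ℝ => f (y + (q.1.1, q.1.2, q.2)) := by fun_prop
  have : (volume : Measure (ℝ × ℝ × ℝ)).IsAddLeftInvariant := Measure.prod.instIsAddLeftInvariant
  have h2 : ∫⁻ x, f (y + x) = ∫⁻ x, f x := lintegral_add_left_eq_self f y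
  rw [← lintegral_prod _ h1.aemeasurable, ← Measure.volume_eq_prod, ← h2]
  exact (MeasureTheory.volume_preserving_prodAssoc (α₁ := ℝ) (β₁ := ℝ) (γ₁ := ℝ)).lintegral_comp
    (hf.comp (measurable_const_add y))

theorem ae_fst_ne_zero : ∀ᵐ u : ℝ × ℝ, u.1 ≠ 0 :=
  Measure.quasiMeasurePreserving_fst.ae (Measure.ae_ne volume (0 : ℝ))

theorem lintegral_trilinear_triangleDet_le {S : ℕ} (hS : 1 ≤ S) {ε : ℝ} (hε : |ε| = 1)
    {f : ℝ × ℝ × ℝ → ℝ≥0∞} (hf : Measurable f) :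
    ∫⁻ x : ℝ × ℝ × ℝ, ∫⁻ t₁ : ℝ × ℝ, ∫⁻ t₂ : ℝ × ℝ, ∫⁻ t₃ : ℝ × ℝ,
      ENNReal.ofReal |triangleDet (fun b => b ^ (S - 1)) t₁ t₂ t₃| *
        (f (x - (t₁.1, t₁.2, quadraticMonomial S ε t₁)) *
          (f (x - (t₂.1, t₂.2, quadraticMonomial S ε t₂)) *
            f (x - (t₃.1, t₃.2, quadraticMonomial S ε t₃)))) ≤ 2 ^ S * (∫⁻ x, f x) ^ 3 := by
  set φ := quadraticMonomial S ε with hφ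
  have hφm : Measurable φ := measurable_quadraticMonomial S ε
  have hdet : Measurable fun q : (ℝ × ℝ) × (ℝ × ℝ) × (ℝ × ℝ) =>
      triangleDet (fun b => b ^ (S - 1)) q.1 q.2.1 q.2.2 := by
    unfold triangleDet
    fun_prop
  have hH : Measurable fun q : (((ℝ × ℝ × ℝ) × (ℝ × ℝ)) × (ℝ × ℝ)) × (ℝ × ℝ) =>
      ENNReal.ofReal |triangleDet (fun b => b ^ (S - 1)) q.1.1.2 q.1.2 q.2| *
        (f (q.1.1.1 - (q.1.1.2.1, q.1.1.2.2, φ q.1.1.2)) *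
          (f (q.1.1.1 - (q.1.2.1, q.1.2.2, φ q.1.2)) * f (q.1.1.1 - (q.2.1, q.2.2, φ q.2)))) := by
    have := hdet.comp (by fun_prop : Measurable
      fun q : (((ℝ × ℝ × ℝ) × (ℝ × ℝ)) × (ℝ × ℝ)) × (ℝ × ℝ) => (q.1.1.2, q.1.2, q.2))
    simp only [Function.comp_def] at this
    fun_prop
  have hK : ∀ y : ℝ × ℝ × ℝ, Measurable fun q : (ℝ × ℝ) × (ℝ × ℝ) × (ℝ × ℝ) =>
      ENNReal.ofReal |triangleDet (fun b => b ^ (S - 1)) q.2.2 (q.2.2 - q.1) (q.2.2 - q.2.1)| *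
        (f y * (f (y + (q.1.1, q.1.2, φ q.2.2 - φ (q.2.2 - q.1))) *
          f (y + (q.2.1.1, q.2.1.2, φ q.2.2 - φ (q.2.2 - q.2.1))))) := by
    intro y
    have := hdet.comp (by fun_prop : Measurable
      fun q : (ℝ × ℝ) × (ℝ × ℝ) × (ℝ × ℝ) => (q.2.2, q.2.2 - q.1, q.2.2 - q.2.1))
    simp only [Function.comp_def] at this
    fun_prop
  have hsub : ∀ (y : ℝ × ℝ × ℝ) (t u : ℝ × ℝ),
      y + (t.1, t.2, φ t) - ((t - u).1, (t - u).2, φ (t - u)) =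
        y + (u.1, u.2, φ t - φ (t - u)) := by
    intro y t u
    ext <;> simp <;> ring
  rw [lintegral_lintegral_translate hφm
    (Measurable.lintegral_prod_right' (Measurable.lintegral_prod_right' hH))]
  calc _ = ∫⁻ y : ℝ × ℝ × ℝ, ∫⁻ t : ℝ × ℝ, ∫⁻ u : ℝ × ℝ, ∫⁻ v : ℝ × ℝ,
        ENNReal.ofReal |triangleDet (fun b => b ^ (S - 1)) t (t - u) (t - v)| *
          (f y * (f (y + (u.1, u.2, φ t - φ (t - u))) *
            f (y + (v.1, v.2, φ t - φ (t - v))))) := by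
        refine lintegral_congr fun y => lintegral_congr fun t => ?_
        rw [← lintegral_sub_left_eq_self _ t]
        refine lintegral_congr fun u => ?_
        rw [← lintegral_sub_left_eq_self _ t]
        refine lintegral_congr fun v => ?_
        rw [hsub, hsub, add_sub_cancel_right]
    _ = ∫⁻ y : ℝ × ℝ × ℝ, ∫⁻ u : ℝ × ℝ, ∫⁻ v : ℝ × ℝ, ∫⁻ t : ℝ × ℝ,
        ENNReal.ofReal |triangleDet (fun b => b ^ (S - 1)) t (t - u) (t - v)| *
          (f y * (f (y + (u.1, u.2, φ t - φ (t - u))) *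
            f (y + (v.1, v.2, φ t - φ (t - v))))) :=
        lintegral_congr fun y => lintegral_lintegral_lintegral_rotate (hK y)
    _ ≤ ∫⁻ y : ℝ × ℝ × ℝ, ∫⁻ u : ℝ × ℝ, ∫⁻ v : ℝ × ℝ, (f y * 2 ^ S) *
        ((∫⁻ p : ℝ, f (y + (u.1, u.2, p))) * ∫⁻ p : ℝ, f (y + (v.1, v.2, p))) := by
        refine lintegral_mono fun y => lintegral_mono_ae ?_
        filter_upwards [ae_fst_ne_zero] with u hu
        refine lintegral_mono fun v => ?_
        have hm := (hdet.comp (by fun_prop : Measurable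
          fun t : ℝ × ℝ => (t, t - u, t - v)))
        simp only [Function.comp_def] at hm
        have key := lintegral_triangleDet_mul_le hS hε (v := v) hu
          (g₁ := fun p => f (y + (u.1, u.2, p))) (g₂ := fun p => f (y + (v.1, v.2, p)))
          (by fun_prop) (by fun_prop)
        rw [mul_assoc]
        refine le_trans (le_of_eq ?_) (mul_le_mul_right key (f y))
        rw [← lintegral_const_mul _ (by fun_prop)]
        exact lintegral_congr fun t => by ring
    _ = ∫⁻ y : ℝ × ℝ × ℝ, (f y * 2 ^ S) * ((∫⁻ x, f x) * ∫⁻ x, f x) := by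
        refine lintegral_congr fun y => ?_
        have hg : Measurable fun u : ℝ × ℝ => ∫⁻ p : ℝ, f (y + (u.1, u.2, p)) :=
          Measurable.lintegral_prod_right'
            (f := fun q : (ℝ × ℝ) × ℝ => f (y + (q.1.1, q.1.2, q.2))) (by fun_prop)
        calc _ = ∫⁻ u : ℝ × ℝ, (f y * 2 ^ S) *
              ((∫⁻ p : ℝ, f (y + (u.1, u.2, p))) * ∫⁻ x, f x) := by
              refine lintegral_congr fun u => ?_
              rw [lintegral_const_mul _ (by fun_prop), lintegral_const_mul _ hg,
                lintegral_prod_triple hf]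
          _ = _ := by
              rw [lintegral_const_mul _ (by fun_prop), lintegral_mul_const _ hg,
                lintegral_prod_triple hf]
    _ = _ := by
        rw [lintegral_mul_const _ (by fun_prop), lintegral_mul_const _ hf]
        ring

theorem lintegral_bilinear_abs_sub_le {S : ℕ} {ε : ℝ} {B : Set ℝ} (hB : MeasurableSet B)
    {f : ℝ × ℝ × ℝ → ℝ≥0∞} (hf : Measurable f) :
    ∫⁻ x : ℝ × ℝ × ℝ, ∫⁻ s : ℝ × ℝ, ∫⁻ t : ℝ × ℝ, ENNReal.ofReal |s.1 - t.1| *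
        (B.indicator 1 s.2 * (f (x - (s.1, s.2, quadraticMonomial S ε s)) *
          f (x - (t.1, t.2, quadraticMonomial S ε t)))) ≤ volume B * (∫⁻ x, f x) ^ 2 := by
  set φ := quadraticMonomial S ε with hφ
  have hφm : Measurable φ := measurable_quadraticMonomial S ε
  have hBm : Measurable (B.indicator (1 : ℝ → ℝ≥0∞)) := measurable_one.indicator hB
  have hH : Measurable fun q : ((ℝ × ℝ × ℝ) × (ℝ × ℝ)) × (ℝ × ℝ) =>
      ENNReal.ofReal |q.1.2.1 - q.2.1| * (B.indicator 1 q.1.2.2 *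
        (f (q.1.1 - (q.1.2.1, q.1.2.2, φ q.1.2)) * f (q.1.1 - (q.2.1, q.2.2, φ q.2)))) := by
    fun_prop
  have hsub : ∀ (y : ℝ × ℝ × ℝ) (t u : ℝ × ℝ),
      y + (t.1, t.2, φ t) - ((t - u).1, (t - u).2, φ (t - u)) =
        y + (u.1, u.2, φ t - φ (t - u)) := by
    intro y t u
    ext <;> simp <;> ring
  have hinner : ∀ (y : ℝ × ℝ × ℝ) (u : ℝ × ℝ), u.1 ≠ 0 →
      ∫⁻ s : ℝ × ℝ, ENNReal.ofReal |u.1| * (B.indicator 1 s.2 *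
        (f y * f (y + (u.1, u.2, φ s - φ (s - u)))))
      ≤ (f y * volume B) * ∫⁻ p : ℝ, f (y + (u.1, u.2, p)) := by
    intro y u hu
    rw [Measure.volume_eq_prod, lintegral_prod_symm _ (by fun_prop)]
    have hb : ∀ b : ℝ, ∫⁻ a : ℝ, ENNReal.ofReal |u.1| * (B.indicator 1 b *
        (f y * f (y + (u.1, u.2, φ (a, b) - φ ((a, b) - u)))))
        ≤ B.indicator 1 b * (f y * ∫⁻ p : ℝ, f (y + (u.1, u.2, p))) := by
      intro b
      set k : ℝ := -u.1 ^ 2 + ε * (b ^ S - (b - u.2) ^ S) with hk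
      have hφu : ∀ a : ℝ, φ (a, b) - φ ((a, b) - u) = 2 * u.1 * a + k := by
        intro a
        simp only [hφ, quadraticMonomial, hk, Prod.fst_sub, Prod.snd_sub]
        ring
      have haff := lintegral_affine_comp_le (mul_ne_zero two_ne_zero hu) k
        (fun p => f (y + (u.1, u.2, p)))
      calc _ = B.indicator 1 b * (f y * (ENNReal.ofReal |u.1| *
            ∫⁻ a : ℝ, f (y + (u.1, u.2, 2 * u.1 * a + k)))) := by
            rw [← lintegral_const_mul _ (by fun_prop), ← lintegral_const_mul _ (by fun_prop),
              ← lintegral_const_mul _ (by fun_prop)]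
            refine lintegral_congr fun a => ?_
            rw [hφu]
            ring
        _ ≤ _ := by
            gcongr
            refine le_trans ?_ haff
            have h2 : |u.1| ≤ |2 * u.1| := by
              rw [abs_mul, abs_two]
              linarith [abs_nonneg u.1]
            gcongr ENNReal.ofReal ?_ * _
    refine (lintegral_mono hb).trans (le_of_eq ?_)
    rw [lintegral_mul_const _ hBm, lintegral_indicator_one hB]
    ring
  rw [lintegral_lintegral_translate hφm (Measurable.lintegral_prod_right' hH)]
  calc _ = ∫⁻ y : ℝ × ℝ × ℝ, ∫⁻ s : ℝ × ℝ, ∫⁻ u : ℝ × ℝ, ENNReal.ofReal |u.1| *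
        (B.indicator 1 s.2 * (f y * f (y + (u.1, u.2, φ s - φ (s - u))))) := by
        refine lintegral_congr fun y => lintegral_congr fun t => ?_
        rw [← lintegral_sub_left_eq_self _ t]
        refine lintegral_congr fun u => ?_
        rw [hsub, add_sub_cancel_right, Prod.fst_sub, sub_sub_cancel]
    _ = ∫⁻ y : ℝ × ℝ × ℝ, ∫⁻ u : ℝ × ℝ, ∫⁻ s : ℝ × ℝ, ENNReal.ofReal |u.1| *
        (B.indicator 1 s.2 * (f y * f (y + (u.1, u.2, φ s - φ (s - u))))) :=
        lintegral_congr fun y => lintegral_lintegral_swap (by fun_prop)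
    _ ≤ ∫⁻ y : ℝ × ℝ × ℝ, ∫⁻ u : ℝ × ℝ, (f y * volume B) *
        ∫⁻ p : ℝ, f (y + (u.1, u.2, p)) := by
        refine lintegral_mono fun y => lintegral_mono_ae ?_
        filter_upwards [ae_fst_ne_zero] with u hu
        exact hinner y u hu
    _ = ∫⁻ y : ℝ × ℝ × ℝ, (f y * volume B) * ∫⁻ x, f x := by
        refine lintegral_congr fun y => ?_
        have hg : Measurable fun u : ℝ × ℝ => ∫⁻ p : ℝ, f (y + (u.1, u.2, p)) :=
          Measurable.lintegral_prod_right'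
            (f := fun q : (ℝ × ℝ) × ℝ => f (y + (q.1.1, q.1.2, q.2))) (by fun_prop)
        rw [lintegral_const_mul _ hg, lintegral_prod_triple hf]
    _ = _ := by
        rw [lintegral_mul_const _ (by fun_prop), lintegral_mul_const _ hf]
        ring

theorem measurable_translate_indicator {φ : ℝ × ℝ → ℝ} (hφ : Measurable φ)
    {E : Set (ℝ × ℝ × ℝ)} (hE : MeasurableSet E) (x : ℝ × ℝ × ℝ) :
    MeasurableSet {t : ℝ × ℝ | x - (t.1, t.2, φ t) ∈ E} :=
  (by fun_prop : Measurable fun t : ℝ × ℝ => x - (t.1, t.2, φ t)) hE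

theorem avgOp_indicator {φ : ℝ × ℝ → ℝ} (hφ : Measurable φ) {R : Set (ℝ × ℝ)}
    {E : Set (ℝ × ℝ × ℝ)} (hE : MeasurableSet E) (x : ℝ × ℝ × ℝ) :
    avgOp φ R (E.indicator 1) x = volume (R ∩ {t | x - (t.1, t.2, φ t) ∈ E}) := by
  have hm := measurable_translate_indicator hφ hE x
  rw [Set.inter_comm, ← Measure.restrict_apply hm, ← lintegral_indicator_one hm]
  rfl

theorem measurable_avgOp {φ : ℝ × ℝ → ℝ} (hφ : Measurable φ) (R : Set (ℝ × ℝ))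
    {f : ℝ × ℝ × ℝ → ℝ≥0∞} (hf : Measurable f) : Measurable (avgOp φ R f) :=
  Measurable.lintegral_prod_right' (f := fun q : (ℝ × ℝ × ℝ) × (ℝ × ℝ) =>
    f (q.1.1 - q.2.1, q.1.2.1 - q.2.2, q.1.2.2 - φ q.2)) (by fun_prop)

theorem lintegral_avgOp_pow_four_le {S : ℕ} (hS : 1 ≤ S) {ε : ℝ} (hε : |ε| = 1) {B : Set ℝ}
    (hB : MeasurableSet B) {κ : ℝ} (hκ : 0 < κ)
    (hψ : ∀ b ∈ B, ∀ b' ∈ B, κ * |b - b'| ≤ |b ^ (S - 1) - b' ^ (S - 1)|)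
    {E : Set (ℝ × ℝ × ℝ)} (hE : MeasurableSet E) :
    ∫⁻ x, avgOp (quadraticMonomial S ε) (Set.univ ×ˢ B) (E.indicator 1) x ^ 4
      ≤ ENNReal.ofReal (48 / κ) * (2 ^ S * volume E ^ 3) := by
  set φ := quadraticMonomial S ε with hφ
  have hφm : Measurable φ := measurable_quadraticMonomial S ε
  have hR : MeasurableSet (Set.univ ×ˢ B : Set (ℝ × ℝ)) := MeasurableSet.univ.prod hB
  set f : ℝ × ℝ × ℝ → ℝ≥0∞ := E.indicator 1 with hf
  have hfm : Measurable f := measurable_one.indicator hE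
  have hf1 : ∀ y ∈ E, f y = 1 := fun y hy => by simp [hf, hy]
  have hpt : ∀ x, avgOp φ (Set.univ ×ˢ B) f x ^ 4 ≤ ENNReal.ofReal (48 / κ) *
      ∫⁻ t₁ : ℝ × ℝ, ∫⁻ t₂ : ℝ × ℝ, ∫⁻ t₃ : ℝ × ℝ,
      ENNReal.ofReal |triangleDet (fun b => b ^ (S - 1)) t₁ t₂ t₃| *
        (f (x - (t₁.1, t₁.2, φ t₁)) *
          (f (x - (t₂.1, t₂.2, φ t₂)) * f (x - (t₃.1, t₃.2, φ t₃)))) := by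
    intro x
    set A := (Set.univ ×ˢ B) ∩ {t : ℝ × ℝ | x - (t.1, t.2, φ t) ∈ E} with hA
    have hAm : MeasurableSet A := hR.inter (measurable_translate_indicator hφm hE x)
    rw [hf, avgOp_indicator hφm hE, ← hf]
    refine (volume_pow_four_le_lintegral_triangleDet (ψ := fun b => b ^ (S - 1)) (by fun_prop) hκ
      hψ hAm (fun t ht => ht.1.2)).trans ?_
    refine mul_le_mul_right ?_ _
    refine (setLIntegral_mono' hAm fun t₁ h₁ => ?_).trans (setLIntegral_le_lintegral A _)
    refine (setLIntegral_mono' hAm fun t₂ h₂ => ?_).trans (setLIntegral_le_lintegral A _)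
    refine (setLIntegral_mono' hAm fun t₃ h₃ => ?_).trans (setLIntegral_le_lintegral A _)
    rw [hf1 _ h₁.2, hf1 _ h₂.2, hf1 _ h₃.2]
    simp
  calc _ ≤ _ := lintegral_mono hpt
    _ = _ := lintegral_const_mul' _ _ ENNReal.ofReal_ne_top
    _ ≤ ENNReal.ofReal (48 / κ) * (2 ^ S * (∫⁻ x, f x) ^ 3) := by
        gcongr
        exact lintegral_trilinear_triangleDet_le hS hε hfm
    _ = _ := by rw [hf, lintegral_indicator_one hE]

theorem lintegral_avgOp_pow_three_le {S : ℕ} {ε L : ℝ} (hL : 0 < L)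
    {E : Set (ℝ × ℝ × ℝ)} (hE : MeasurableSet E) :
    ∫⁻ x, avgOp (quadraticMonomial S ε) (Set.univ ×ˢ Set.Icc (-L) L) (E.indicator 1) x ^ 3
      ≤ ENNReal.ofReal (32 * L ^ 2) * volume E ^ 2 := by
  set φ := quadraticMonomial S ε with hφ
  have hφm : Measurable φ := measurable_quadraticMonomial S ε
  have hR : MeasurableSet (Set.univ ×ˢ Set.Icc (-L) L : Set (ℝ × ℝ)) :=
    MeasurableSet.univ.prod measurableSet_Icc
  set f : ℝ × ℝ × ℝ → ℝ≥0∞ := E.indicator 1 with hf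
  have hfm : Measurable f := measurable_one.indicator hE
  have hf1 : ∀ y ∈ E, f y = 1 := fun y hy => by simp [hf, hy]
  have hpt : ∀ x, avgOp φ (Set.univ ×ˢ Set.Icc (-L) L) f x ^ 3 ≤ ENNReal.ofReal (16 * L) *
      ∫⁻ s : ℝ × ℝ, ∫⁻ t : ℝ × ℝ, ENNReal.ofReal |s.1 - t.1| *
        ((Set.Icc (-L) L).indicator 1 s.2 *
          (f (x - (s.1, s.2, φ s)) * f (x - (t.1, t.2, φ t)))) := by
    intro x
    set A := (Set.univ ×ˢ Set.Icc (-L) L) ∩ {t : ℝ × ℝ | x - (t.1, t.2, φ t) ∈ E} with hA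
    have hAm : MeasurableSet A := hR.inter (measurable_translate_indicator hφm hE x)
    rw [hf, avgOp_indicator hφm hE, ← hf]
    refine (volume_pow_three_le_lintegral_abs_sub hL hAm (fun t ht => ht.1.2)).trans ?_
    refine mul_le_mul_right ?_ _
    refine (setLIntegral_mono' hAm fun s h₁ => ?_).trans (setLIntegral_le_lintegral A _)
    refine (setLIntegral_mono' hAm fun t h₂ => ?_).trans (setLIntegral_le_lintegral A _)
    rw [hf1 _ h₁.2, hf1 _ h₂.2, Set.indicator_of_mem h₁.1.2]
    simp
  calc _ ≤ _ := lintegral_mono hpt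
    _ = _ := lintegral_const_mul' _ _ ENNReal.ofReal_ne_top
    _ ≤ ENNReal.ofReal (16 * L) * (volume (Set.Icc (-L) L) * (∫⁻ x, f x) ^ 2) := by
        gcongr
        exact lintegral_bilinear_abs_sub_le measurableSet_Icc hfm
    _ = _ := by
        rw [hf, lintegral_indicator_one hE, Real.volume_Icc, ← mul_assoc,
          ← ENNReal.ofReal_mul (by positivity)]
        congr 2
        ring

theorem pairing_le_of_lintegral_pow_le {φ : ℝ × ℝ → ℝ} (hφ : Measurable φ) (R : Set (ℝ × ℝ))
    {E F : Set (ℝ × ℝ × ℝ)} (hE : MeasurableSet E) (hF : MeasurableSet F) {p q : ℝ}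
    (hpq : p.HolderConjugate q) {M : ℝ≥0∞}
    (h : ∫⁻ x, avgOp φ R (E.indicator 1) x ^ p ≤ M) :
    pairing φ R E F ≤ M ^ (1 / p) * volume F ^ (1 / q) := by
  have hF1 : ∀ x, (F.indicator (1 : ℝ × ℝ × ℝ → ℝ≥0∞) x) ^ q = F.indicator 1 x := by
    intro x
    by_cases hx : x ∈ F
    · simp [hx]
    · simp [hx, hpq.symm.pos]
  have key := ENNReal.lintegral_mul_le_Lp_mul_Lq volume hpq
    (measurable_avgOp hφ R (measurable_one.indicator hE)).aemeasurable
    (measurable_one.indicator hF : Measurable (F.indicator (1 : ℝ × ℝ × ℝ → ℝ≥0∞))).aemeasurable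
  simp only [hF1] at key
  rw [lintegral_indicator_one hF] at key
  refine le_trans key ?_
  have := hpq.pos
  gcongr

theorem pow_mul_abs_sub_le_abs_pow_sub_pow (n : ℕ) {L : ℝ} (hL : 0 < L) {b b' : ℝ} (hb : L < b)
    (hb' : L < b') : L ^ n * |b - b'| ≤ |b ^ (n + 1) - b' ^ (n + 1)| := by
  wlog h : b' ≤ b generalizing b b'
  · rw [abs_sub_comm b, abs_sub_comm (b ^ (n + 1))]
    exact this hb' hb (le_of_not_ge h)
  have h0 : 0 < b' := hL.trans hb'
  rw [abs_of_nonneg (sub_nonneg.2 h)]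
  refine le_trans ?_ (le_abs_self _)
  have h1 : L ^ n ≤ b' ^ n := pow_le_pow_left₀ hL.le hb'.le n
  have h2 : b' ^ n ≤ b ^ n := pow_le_pow_left₀ h0.le h n
  calc L ^ n * (b - b') ≤ b' ^ n * (b - b') := by gcongr
    _ = b' ^ n * b - b' ^ (n + 1) := by ring
    _ ≤ b ^ n * b - b' ^ (n + 1) := by gcongr; linarith
    _ = _ := by ring

theorem pow_mul_abs_sub_le_abs_pow_sub_pow_of_lt_neg (n : ℕ) {L : ℝ} (hL : 0 < L) {b b' : ℝ}
    (hb : b < -L) (hb' : b' < -L) : L ^ n * |b - b'| ≤ |b ^ (n + 1) - b' ^ (n + 1)| := by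
  have h := pow_mul_abs_sub_le_abs_pow_sub_pow n hL (b := -b) (b' := -b') (by linarith)
    (by linarith)
  rw [neg_pow b, neg_pow b', ← mul_sub, abs_mul, abs_neg_one_pow, one_mul,
    ← neg_sub_neg, neg_neg, neg_neg, abs_sub_comm] at h
  exact h

theorem pairing_le_add_of_strip (n : ℕ) {ε : ℝ} (hε : |ε| = 1) {L : ℝ} (hL : 0 < L)
    {E F : Set (ℝ × ℝ × ℝ)} (hE : MeasurableSet E) (hF : MeasurableSet F) :
    pairing (quadraticMonomial (n + 2) ε) Set.univ E F ≤
      (ENNReal.ofReal (32 * L ^ 2) * volume E ^ 2) ^ (1 / 3 : ℝ) * volume F ^ (2 / 3 : ℝ) +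
      2 * ((ENNReal.ofReal (48 / L ^ n) * (2 ^ (n + 2) * volume E ^ 3)) ^ (1 / 4 : ℝ) *
        volume F ^ (3 / 4 : ℝ)) := by
  set φ := quadraticMonomial (n + 2) ε with hφ
  have hφm : Measurable φ := measurable_quadraticMonomial _ _
  have hfm : Measurable (E.indicator (1 : ℝ × ℝ × ℝ → ℝ≥0∞)) := measurable_one.indicator hE
  have hgm : Measurable (F.indicator (1 : ℝ × ℝ × ℝ → ℝ≥0∞)) := measurable_one.indicator hF
  have hLn : 0 < L ^ n := pow_pos hL n
  have hsplit : (Set.univ : Set (ℝ × ℝ)) = (Set.univ ×ˢ Set.Icc (-L) L) ∪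
      ((Set.univ ×ˢ Set.Ioi L) ∪ (Set.univ ×ˢ Set.Iio (-L))) := by
    refine (Set.eq_univ_of_forall fun t => ?_).symm
    rcases lt_or_ge L t.2 with h | h
    · exact Or.inr (Or.inl ⟨trivial, h⟩)
    rcases lt_or_ge t.2 (-L) with h' | h'
    · exact Or.inr (Or.inr ⟨trivial, h'⟩)
    · exact Or.inl ⟨trivial, h', h⟩
  have hadd : pairing φ Set.univ E F ≤ pairing φ (Set.univ ×ˢ Set.Icc (-L) L) E F +
      (pairing φ (Set.univ ×ˢ Set.Ioi L) E F + pairing φ (Set.univ ×ˢ Set.Iio (-L)) E F) := by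
    have hm : ∀ R : Set (ℝ × ℝ), Measurable fun x =>
        avgOp φ R (E.indicator 1) x * F.indicator 1 x :=
      fun R => (measurable_avgOp hφm R hfm).mul hgm
    simp only [pairing]
    rw [← lintegral_add_left (hm _), ← lintegral_add_left (hm _)]
    refine lintegral_mono fun x => ?_
    simp only
    rw [← add_mul, ← add_mul]
    gcongr
    rw [hsplit]
    exact (lintegral_union_le _ _ _).trans (add_le_add le_rfl (lintegral_union_le _ _ _))
  have h3 : (3 : ℝ).HolderConjugate (3 / 2) := by
    rw [Real.holderConjugate_iff]; norm_num
  have h4 : (4 : ℝ).HolderConjugate (4 / 3) := by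
    rw [Real.holderConjugate_iff]; norm_num
  have hsmall := lintegral_avgOp_pow_three_le (S := n + 2) (ε := ε) hL hE
  have hpos := lintegral_avgOp_pow_four_le (S := n + 2) (by omega) hε measurableSet_Ioi hLn
    (fun b hb b' hb' => pow_mul_abs_sub_le_abs_pow_sub_pow n hL hb hb') hE
  have hneg := lintegral_avgOp_pow_four_le (S := n + 2) (by omega) hε measurableSet_Iio hLn
    (fun b hb b' hb' => pow_mul_abs_sub_le_abs_pow_sub_pow_of_lt_neg n hL hb hb') hE
  simp only [← ENNReal.rpow_ofNat _ 3] at hsmall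
  simp only [← ENNReal.rpow_ofNat _ 4] at hpos hneg
  have hsmall' := pairing_le_of_lintegral_pow_le hφm _ hE hF h3 hsmall
  have hpos' := pairing_le_of_lintegral_pow_le hφm _ hE hF h4 hpos
  have hneg' := pairing_le_of_lintegral_pow_le hφm _ hE hF h4 hneg
  rw [one_div_div] at hsmall' hpos' hneg'
  rw [two_mul]
  exact hadd.trans (add_le_add hsmall' (add_le_add hpos' hneg'))

theorem strip_bound_eq (n : ℕ) {a b : ℝ} (ha : 0 < a) (hb : 0 < b) :
    (32 * ((a * b) ^ (1 / (3 * ((n : ℝ) + 2) + 2))) ^ 2 * a ^ 2) ^ (1 / 3 : ℝ) * b ^ (2 / 3 : ℝ) +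
      2 * ((48 / ((a * b) ^ (1 / (3 * ((n : ℝ) + 2) + 2))) ^ n * (2 ^ (n + 2) * a ^ 3))
        ^ (1 / 4 : ℝ) * b ^ (3 / 4 : ℝ))
      = (32 ^ (1 / 3 : ℝ) + 2 * (48 * 2 ^ (n + 2)) ^ (1 / 4 : ℝ)) *
        (a ^ ((2 * ((n : ℝ) + 2) + 2) / (3 * ((n : ℝ) + 2) + 2)) *
          b ^ ((2 * ((n : ℝ) + 2) + 2) / (3 * ((n : ℝ) + 2) + 2))) := by
  have hX : 0 < a * b := mul_pos ha hb
  set X := a * b with hXdef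
  have hD : (3 * ((n : ℝ) + 2) + 2) ≠ 0 := by positivity
  have h1 : (32 * (X ^ (1 / (3 * ((n : ℝ) + 2) + 2))) ^ 2 * a ^ 2) ^ (1 / 3 : ℝ) * b ^ (2 / 3 : ℝ)
      = 32 ^ (1 / 3 : ℝ) * X ^ ((2 * ((n : ℝ) + 2) + 2) / (3 * ((n : ℝ) + 2) + 2)) := by
    have e : X ^ ((2 * ((n : ℝ) + 2) + 2) / (3 * ((n : ℝ) + 2) + 2)) =
        X ^ (1 / (3 * ((n : ℝ) + 2) + 2) * (2 * (1 / 3))) * X ^ (2 / 3 : ℝ) := by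
      rw [← Real.rpow_add hX]
      congr 1
      field_simp
      ring
    rw [Real.mul_rpow (by positivity) (by positivity), Real.mul_rpow (by positivity) (by positivity),
      ← Real.rpow_natCast, ← Real.rpow_natCast, ← Real.rpow_mul hX.le, ← Real.rpow_mul hX.le,
      ← Real.rpow_mul ha.le, e, hXdef, Real.mul_rpow (z := 2 / 3) ha.le hb.le]
    norm_num
    ring_nf
  have h2 : (48 / (X ^ (1 / (3 * ((n : ℝ) + 2) + 2))) ^ n * (2 ^ (n + 2) * a ^ 3)) ^ (1 / 4 : ℝ) *
      b ^ (3 / 4 : ℝ) = (48 * 2 ^ (n + 2)) ^ (1 / 4 : ℝ) *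
        X ^ ((2 * ((n : ℝ) + 2) + 2) / (3 * ((n : ℝ) + 2) + 2)) := by
    have e : X ^ ((2 * ((n : ℝ) + 2) + 2) / (3 * ((n : ℝ) + 2) + 2)) =
        X ^ (1 / (3 * ((n : ℝ) + 2) + 2) * (-n * (1 / 4))) * X ^ (3 / 4 : ℝ) := by
      rw [← Real.rpow_add hX]
      congr 1
      field_simp
      ring
    have e2 : 48 / (X ^ (1 / (3 * ((n : ℝ) + 2) + 2))) ^ n * (2 ^ (n + 2) * a ^ 3) =
        48 * 2 ^ (n + 2) * (X ^ (1 / (3 * ((n : ℝ) + 2) + 2) * -n) * a ^ (3 : ℝ)) := by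
      rw [mul_neg, Real.rpow_neg hX.le, Real.rpow_mul hX.le, Real.rpow_natCast,
        show (3 : ℝ) = ((3 : ℕ) : ℝ) by norm_num, Real.rpow_natCast]
      field_simp
    rw [e2, Real.mul_rpow (x := 48 * 2 ^ (n + 2)) (by positivity) (by positivity),
      Real.mul_rpow (y := a ^ (3 : ℝ)) (by positivity) (by positivity), ← Real.rpow_mul hX.le, ← Real.rpow_mul ha.le,
      e, hXdef, Real.mul_rpow (z := 3 / 4) ha.le hb.le]
    norm_num
    ring_nf
  rw [h1, h2, hXdef, Real.mul_rpow ha.le hb.le]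
  ring

/-- For φ(t) = t₁² + εt₂^S (S ≥ 3, ε = ±1), the averaging operator over all of ℝ²
satisfies `⟨T χ_E, χ_F⟩ ≤ C |E|^{(2S+2)/(3S+2)} |F|^{(2S+2)/(3S+2)}`; that is, T is of
restricted weak type (p,q) with 1/p = (2S+2)/(3S+2), 1/q = S/(3S+2). -/
theorem stmt_19 (S : ℕ) (hS : 3 ≤ S) (ε : ℝ) (hε : ε = 1 ∨ ε = -1) :
    ∃ C : ℝ, 0 ≤ C ∧ ∀ E F : Set (ℝ × ℝ × ℝ), MeasurableSet E → MeasurableSet F →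
      volume E < ⊤ → volume F < ⊤ →
      pairing (fun t => t.1 ^ 2 + ε * t.2 ^ S) Set.univ E F ≤
        ENNReal.ofReal C * volume E ^ ((2 * (S : ℝ) + 2) / (3 * (S : ℝ) + 2))
          * volume F ^ ((2 * (S : ℝ) + 2) / (3 * (S : ℝ) + 2)) := by
  obtain ⟨n, rfl⟩ : ∃ n, S = n + 2 := ⟨S - 2, by omega⟩
  have hε' : |ε| = 1 := by rcases hε with rfl | rfl <;> simp
  set C : ℝ := 32 ^ (1 / 3 : ℝ) + 2 * (48 * 2 ^ (n + 2)) ^ (1 / 4 : ℝ) with hC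
  have hC0 : 0 ≤ C := by positivity
  refine ⟨C, hC0, fun E F hE hF hEt hFt => ?_⟩
  by_cases hE0 : volume E = 0
  · refine (pairing_le_add_of_strip n hε' one_pos hE hF).trans ?_
    simp [hE0]
  by_cases hF0 : volume F = 0
  · refine (pairing_le_add_of_strip n hε' one_pos hE hF).trans ?_
    simp [hF0]
  obtain ⟨a, ha, hEa⟩ : ∃ a : ℝ, 0 < a ∧ volume E = ENNReal.ofReal a :=
    ⟨(volume E).toReal, ENNReal.toReal_pos hE0 hEt.ne, (ENNReal.ofReal_toReal hEt.ne).symm⟩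
  obtain ⟨b, hb, hFb⟩ : ∃ b : ℝ, 0 < b ∧ volume F = ENNReal.ofReal b :=
    ⟨(volume F).toReal, ENNReal.toReal_pos hF0 hFt.ne, (ENNReal.ofReal_toReal hFt.ne).symm⟩
  set L : ℝ := (a * b) ^ (1 / (3 * ((n : ℝ) + 2) + 2)) with hL
  have hL0 : 0 < L := Real.rpow_pos_of_pos (mul_pos ha hb) _
  have h2 : (2 : ℝ≥0∞) = ENNReal.ofReal 2 := (ENNReal.ofReal_ofNat 2).symm
  refine (pairing_le_add_of_strip n hε' hL0 hE hF).trans (le_of_eq ?_)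
  rw [hEa, hFb, h2, mul_assoc (ENNReal.ofReal C)]
  push_cast
  simp (discharger := positivity) only [← ENNReal.ofReal_pow, ENNReal.ofReal_rpow_of_pos,
    ← ENNReal.ofReal_mul, ← ENNReal.ofReal_add]
  rw [hL, strip_bound_eq n ha hb]
end
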